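/- For every partition P of [s], the coefficient c_{s,P} of h_0·Σ_{i=1}^{s} h_1^{n-1}···h_i^{n-2}···h_s^{n-1} in the Chow class [W_{s,P}] ∈ A^{s(n-1)}(P_s) equals binom(n,2)·(n-1)_{|P|-1}, where (a)_b denotes the falling factorial. In particular, the coefficient c̃_s of h_0·Σ_{i=1}^{s} h_1^{n-1}···h_i^{n-2}···h_s^{n-1} in [W̃_s] equals binom(n,2)·(n-1)_{s-1}. -/

import Mathlib

noncomputable section

/-! ## Zariski topology on complex affine space -/

/-- The Zariski topology on the affine space `ι → ℂ`: the basic open sets are the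
complements of hypersurfaces. -/
def zTop (ι : Type*) : TopologicalSpace (ι → ℂ) :=
  TopologicalSpace.generateFrom
    {U | ∃ p : MvPolynomial ι ℂ, U = {x | MvPolynomial.eval x p ≠ 0}}

/-- Zariski open subset of affine space. -/
def zOpen {ι : Type*} (U : Set (ι → ℂ)) : Prop := @IsOpen _ (zTop ι) U

/-- Zariski closed subset of affine space. -/
def zClosed {ι : Type*} (Z : Set (ι → ℂ)) : Prop := @IsClosed _ (zTop ι) Z

/-- Zariski density. -/
def zDense {ι : Type*} (S : Set (ι → ℂ)) : Prop := @Dense _ (zTop ι) S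

/-- Zariski closure. -/
def zClosure {ι : Type*} (S : Set (ι → ℂ)) : Set (ι → ℂ) := @closure _ (zTop ι) S

/-- Irreducibility in the Zariski topology. -/
def zIrred {ι : Type*} (S : Set (ι → ℂ)) : Prop := @IsIrreducible _ (zTop ι) S

/-- The dimension of a subset of affine space: the topological Krull dimension of the
subspace topology induced by the Zariski topology. -/
def zDim {ι : Type*} (S : Set (ι → ℂ)) : WithBot ℕ∞ :=
  @topologicalKrullDim S (TopologicalSpace.induced Subtype.val (zTop ι))

/-- The common zero set of a family of polynomials. -/
def vanishSet {ι : Type*} (S : Set (MvPolynomial ι ℂ)) : Set (ι → ℂ) :=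
  {x | ∀ p ∈ S, MvPolynomial.eval x p = 0}

/-- The ideal of all polynomials vanishing on a subset of affine space. -/
def vanishingIdealOf {ι : Type*} (X : Set (ι → ℂ)) : Ideal (MvPolynomial ι ℂ) where
  carrier := {p | ∀ x ∈ X, MvPolynomial.eval x p = 0}
  add_mem' := by
    intro a b ha hb x hx
    simp [ha x hx, hb x hx]
  zero_mem' := by
    intro x hx
    simp
  smul_mem' := by
    intro c p hp x hx
    simp [smul_eq_mul, hp x hx]

/-- A subset of `ι → ℂ` is a cone if it is stable under scalar multiplication. -/
def IsCone {ι : Type*} (X : Set (ι → ℂ)) : Prop :=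
  ∀ (c : ℂ) (v : ι → ℂ), v ∈ X → c • v ∈ X

/-- The affine-linear subspace cut out by `k` affine-linear equations whose coefficients are
recorded by `a` (the `none` coordinate records the constant term). -/
def affSlice {ι : Type*} [Fintype ι] {k : ℕ} (a : Fin k × Option ι → ℂ) : Set (ι → ℂ) :=
  {x | ∀ j : Fin k, a (j, none) + ∑ i : ι, a (j, some i) * x i = 0}

/-- `hasConeDegree C k δ` : the projective variety with affine cone `C ⊆ ℂ^ι` and projective
dimension `k` has degree `δ`, expressed by saying that a generic affine-linear slice of `C` of
codimension `k + 1` consists of exactly `δ` points. -/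
def hasConeDegree {ι : Type*} [Fintype ι] (C : Set (ι → ℂ)) (k δ : ℕ) : Prop :=
  ∃ U : Set (Fin (k + 1) × Option ι → ℂ), zOpen U ∧ zDense U ∧
    ∀ a ∈ U, (C ∩ affSlice a).ncard = δ

/-! ## Eigenvectors and the Kalman variety -/

/-- `v` is an eigenvector of the matrix `A`. -/
def IsEigenvector {n : ℕ} (A : Matrix (Fin n) (Fin n) ℂ) (v : Fin n → ℂ) : Prop :=
  v ≠ 0 ∧ ∃ lam : ℂ, A.mulVec v = lam • v

/-- The space of `n × n` complex matrices, presented as an affine space. -/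
abbrev MatSpace (n : ℕ) := Fin n × Fin n → ℂ

/-- The matrix corresponding to a point of `MatSpace n`. -/
def toMat {n : ℕ} (A : MatSpace n) : Matrix (Fin n) (Fin n) ℂ :=
  Matrix.of fun i j => A (i, j)

/-- The affine cone over the Kalman variety `𝒦(X)` of the projective variety whose affine
cone is `X`: all matrices having an eigenvector lying on `X`. -/
def kalmanCone {n : ℕ} (X : Set (Fin n → ℂ)) : Set (MatSpace n) :=
  {A | ∃ v ∈ X, IsEigenvector (toMat A) v}



/-! ## Symmetric powers of matrices and Kalman matrices -/

/-- Index set for the monomials of degree `d` in `n` variables. -/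
abbrev MonIdx (n d : ℕ) := Sym (Fin n) d

/-- The exponent vector of the monomial indexed by `σ`. -/
def monExp {n d : ℕ} (σ : MonIdx n d) : Fin n →₀ ℕ :=
  Multiset.toFinsupp (σ : Multiset (Fin n))

/-- The generic `n × n` matrix, whose entries are the variables of `ℂ[A]`. -/
def genMat (n : ℕ) : Matrix (Fin n) (Fin n) (MvPolynomial (Fin n × Fin n) ℂ) :=
  Matrix.of fun i j => MvPolynomial.X (i, j)

/-- The `d`-th symmetric power `ρ_d(A)` of a square matrix `A`, i.e. the matrix (in the basis of
monomials of degree `d`) of the induced action of `A` on forms of degree `d`: the entry at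
`(τ, σ)` is the coefficient of `x^σ` in `(A·x)^τ`. -/
def symPow {R : Type*} [CommRing R] {n : ℕ} (d : ℕ) (A : Matrix (Fin n) (Fin n) R) :
    Matrix (MonIdx n d) (MonIdx n d) R :=
  Matrix.of fun τ σ =>
    MvPolynomial.coeff (monExp σ)
      (∏ j : Fin n, (∑ k : Fin n, MvPolynomial.C (A j k) * MvPolynomial.X k) ^ (monExp τ j))

/-- The coefficient vector of a form of degree `d`. -/
def coeffVec {n : ℕ} (d : ℕ) (f : MvPolynomial (Fin n) ℂ) : MonIdx n d → ℂ :=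
  fun σ => MvPolynomial.coeff (monExp σ) f

/-- The form of degree `d` with coefficient vector `c`. -/
def polyOf {n d : ℕ} (c : MonIdx n d → ℂ) : MvPolynomial (Fin n) ℂ :=
  ∑ σ : MonIdx n d, MvPolynomial.monomial (monExp σ) (c σ)

/-- The rectangular Kalman matrix of order `d` associated with a `p × N` coefficient matrix `C`:
its rows are the rows of `C`, `C·ρ_d(A)`, ..., `C·ρ_d(A)^{t-1}` for the generic matrix `A`. -/
def kalmanMat {n d p : ℕ} (t : ℕ) (C : Matrix (Fin p) (MonIdx n d) ℂ) :
    Matrix (Fin t × Fin p) (MonIdx n d) (MvPolynomial (Fin n × Fin n) ℂ) :=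
  Matrix.of fun r τ =>
    ∑ κ : MonIdx n d, MvPolynomial.C (C r.2 κ) * ((symPow d (genMat n)) ^ (r.1 : ℕ)) κ τ

/-- The square Kalman matrix `K_d(f)` of a form `f` with coefficient vector `c`: the rows are
`C_f ρ_d(A)^i` for `i = 0, …, N - 1` (indexed by monomials through a fixed enumeration). -/
def kalmanSq {n : ℕ} (d : ℕ) (c : MonIdx n d → ℂ) :
    Matrix (MonIdx n d) (MonIdx n d) (MvPolynomial (Fin n × Fin n) ℂ) :=
  Matrix.of fun σ τ =>
    ∑ κ : MonIdx n d, MvPolynomial.C (c κ) *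
      ((symPow d (genMat n)) ^ ((Fintype.equivFin (MonIdx n d)) σ : ℕ)) κ τ

/-- The determinant of the square Kalman matrix of order `d`. -/
def kalmanDet {n : ℕ} (d : ℕ) (c : MonIdx n d → ℂ) : MvPolynomial (Fin n × Fin n) ℂ :=
  (kalmanSq d c).det

/-- The locus of matrices at which all maximal minors of a (rectangular) matrix of polynomials
in `ℂ[A]` vanish. -/
def maxMinorsZeroSet {n d : ℕ} {ridx : Type*}
    (M : Matrix ridx (MonIdx n d) (MvPolynomial (Fin n × Fin n) ℂ)) : Set (MatSpace n) :=
  {A | ∀ e : MonIdx n d → ridx, Function.Injective e →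
    MvPolynomial.eval A (Matrix.det (Matrix.of fun σ τ => M (e σ) τ)) = 0}



/-! ## Polarizations and μ-Kalman varieties -/

/-- Evaluation of the multihomogeneous polarization `f_μ` of `f` at a tuple of vectors
`v_1, …, v_s` (up to a nonzero rational normalization constant): the coefficient of `t^μ`
in `f(t_1 v_1 + ⋯ + t_s v_s)`. -/
def polarEval {n s : ℕ} (f : MvPolynomial (Fin n) ℂ) (μ : Fin s → ℕ)
    (v : Fin s → Fin n → ℂ) : ℂ :=
  MvPolynomial.coeff (Finsupp.equivFunOnFinite.symm μ)
    (MvPolynomial.eval₂ MvPolynomial.C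
      (fun k => ∑ i : Fin s, MvPolynomial.C (v i k) * MvPolynomial.X i) f)

/-- The affine cone over the `μ`-Kalman variety `𝒦_μ(f)`: the Zariski closure of the set of
matrices admitting linearly independent eigenvectors `v_1, …, v_s` with `f_μ(v_1, …, v_s) = 0`. -/
def muKalmanCone {n : ℕ} (f : MvPolynomial (Fin n) ℂ) {s : ℕ} (μ : Fin s → ℕ) :
    Set (MatSpace n) :=
  zClosure {A | ∃ v : Fin s → (Fin n → ℂ),
    (∀ i, IsEigenvector (toMat A) (v i)) ∧ LinearIndependent ℂ v ∧ polarEval f μ v = 0}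

/-- The parts of a partition of `d`, listed as a tuple. -/
def partTuple (d : ℕ) (μ : Nat.Partition d) : Fin (Multiset.card μ.parts) → ℕ :=
  fun i => μ.parts.toList.get (i.cast (Multiset.length_toList _).symm)

/-- The multiset of nonzero exponents of the monomial indexed by `σ`. -/
def expMultiset {n d : ℕ} (σ : Sym (Fin n) d) : Multiset ℕ :=
  Multiset.filter (fun e => e ≠ 0)
    (Multiset.map (fun i => Multiset.toFinsupp (σ : Multiset (Fin n)) i) Finset.univ.val)

/-! ## Tangent spaces, smooth points and singular loci -/

/-- The Zariski tangent space of `X ⊆ ℂ^ι` at `x`: the common kernel of the differentials at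
`x` of all polynomials vanishing on `X`. -/
def tangentSpace {ι : Type*} [Fintype ι] (X : Set (ι → ℂ)) (x : ι → ℂ) :
    Submodule ℂ (ι → ℂ) where
  carrier := {u | ∀ p : MvPolynomial ι ℂ, (∀ y ∈ X, MvPolynomial.eval y p = 0) →
      ∑ i : ι, u i * MvPolynomial.eval x (MvPolynomial.pderiv i p) = 0}
  add_mem' := by
    intro a b ha hb p hp
    have h1 := ha p hp
    have h2 := hb p hp
    simp only [Pi.add_apply, add_mul, Finset.sum_add_distrib, h1, h2, add_zero]
  zero_mem' := by
    intro p hp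
    simp
  smul_mem' := by
    intro c u hu p hp
    have h1 := hu p hp
    simp only [Pi.smul_apply, smul_eq_mul, mul_assoc, ← Finset.mul_sum, h1, mul_zero]

/-- The local dimension of `X` at `x`, in the Zariski topology. -/
def zLocalDim {ι : Type*} (X : Set (ι → ℂ)) (x : ι → ℂ) : WithBot ℕ∞ :=
  ⨅ (U : Set (ι → ℂ)) (_ : zOpen U) (_ : x ∈ U), zDim (X ∩ U)

/-- `x` is a smooth point of `X`: the Zariski tangent space has dimension equal to the local
dimension of `X` at `x`. -/
def smoothAt {ι : Type*} [Fintype ι] (X : Set (ι → ℂ)) (x : ι → ℂ) : Prop :=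
  ((Module.finrank ℂ (tangentSpace X x) : ℕ∞) : WithBot ℕ∞) = zLocalDim X x

/-- The affine cone over the singular locus of the projective variety whose affine cone is `X`:
the nonzero points of `X` that are not smooth points. -/
def projSingCone {ι : Type*} [Fintype ι] (X : Set (ι → ℂ)) : Set (ι → ℂ) :=
  {x | x ∈ X ∧ x ≠ 0 ∧ ¬ smoothAt X x}

/-- The affine cone over the (reduced) singular locus of the Kalman variety of the projective
variety with affine cone `X`. -/
def singKalmanCone {n : ℕ} (X : Set (Fin n → ℂ)) : Set (MatSpace n) :=
  zClosure (projSingCone (zClosure (kalmanCone X)))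



/-! ## The spaces `ℙ_s = ℙ^{n²-1} × (ℙ^{n-1})^s` (as multicones) -/

/-- Coordinates for the multicone over `ℙ^{n²-1} × (ℙ^{n-1})^{×s}`. -/
abbrev MIdx (n s : ℕ) := (Fin n × Fin n) ⊕ (Fin s × Fin n)

/-- The matrix component of a point of the multicone. -/
def matPart {n s : ℕ} (x : MIdx n s → ℂ) : MatSpace n := fun ij => x (Sum.inl ij)

/-- The `i`-th vector component of a point of the multicone. -/
def vecPart {n s : ℕ} (x : MIdx n s → ℂ) (i : Fin s) : Fin n → ℂ := fun k => x (Sum.inr (i, k))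

/-- A partition of `{1, …, s}` into `k` (indexed) nonempty pairwise disjoint blocks. -/
structure IdxPartition (s k : ℕ) where
  block : Fin k → Finset (Fin s)
  nonempty : ∀ i, (block i).Nonempty
  disj : ∀ i j, i ≠ j → Disjoint (block i) (block j)
  cover : ∀ p : Fin s, ∃ i, p ∈ block i

/-- The minimal representative of the `i`-th block. -/
def IdxPartition.rep {s k : ℕ} (P : IdxPartition s k) (i : Fin k) : Fin s :=
  (P.block i).min' (P.nonempty i)

/-- The finest partition, all of whose blocks are singletons. -/
def singletonPartition (s : ℕ) : IdxPartition s s where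
  block i := {i}
  nonempty i := ⟨i, by simp⟩
  disj i j h := Finset.disjoint_singleton.2 h
  cover p := ⟨p, by simp⟩

/-- A tuple of nonzero vectors is `P`-compatible: vectors within each block of `P` are
proportional, and representatives of the distinct blocks are linearly independent. -/
def PCompatible {n s k : ℕ} (P : IdxPartition s k) (v : Fin s → Fin n → ℂ) : Prop :=
  (∀ p, v p ≠ 0) ∧
  (∀ i, ∀ p ∈ P.block i, ∀ q ∈ P.block i, ∃ c : ℂ, v p = c • v q) ∧
  (∀ r : Fin k → Fin s, (∀ i, r i ∈ P.block i) → LinearIndependent ℂ (fun i => v (r i)))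

/-- The multicone over `W_s`: tuples `(A, v_1, …, v_s)` where each `v_i` is an eigenvector of
the (nonzero) matrix `A`. -/
def Wcone (n s : ℕ) : Set (MIdx n s → ℂ) :=
  {x | matPart x ≠ 0 ∧ ∀ i, IsEigenvector (toMat (matPart x)) (vecPart x i)}

/-- The multicone over `W_{s,P}`: the Zariski closure of the set of tuples in `W_s` whose
vector part is `P`-compatible. -/
def WsPcone (n : ℕ) {s k : ℕ} (P : IdxPartition s k) : Set (MIdx n s → ℂ) :=
  zClosure {x | x ∈ Wcone n s ∧ PCompatible P (fun i => vecPart x i)}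

/-! ## Multidegrees -/

/-- Parameter space for a multiprojective slice of multidegree type `γ`. -/
abbrev MSliceParam (n s : ℕ) (γ : Fin (s + 1) → ℕ) : Type :=
  (Fin (n ^ 2 - γ 0) × Option (Fin n × Fin n)) ⊕ ((Σ j : Fin s, Fin (n - γ j.succ)) × Option (Fin n))

/-- The multiprojective affine-linear slice with parameters `a`: it cuts the matrix factor by
`n² - γ 0` affine-linear equations and the `j`-th vector factor by `n - γ (j+1)` affine-linear
equations. -/
def mSlice {n s : ℕ} (γ : Fin (s + 1) → ℕ) (a : MSliceParam n s γ → ℂ) :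
    Set (MIdx n s → ℂ) :=
  {x | (∀ r : Fin (n ^ 2 - γ 0),
          a (Sum.inl (r, none)) +
            ∑ ij : Fin n × Fin n, a (Sum.inl (r, some ij)) * x (Sum.inl ij) = 0) ∧
       (∀ j : Fin s, ∀ r : Fin (n - γ j.succ),
          a (Sum.inr (⟨j, r⟩, none)) +
            ∑ k : Fin n, a (Sum.inr (⟨j, r⟩, some k)) * x (Sum.inr (j, k)) = 0)}

/-- `hasMD W γ δ` : the coefficient of the monomial `h_0^{γ 0} h_1^{γ 1} ⋯ h_s^{γ s}` in the
Chow class of the multiprojective variety with multicone `W ⊆ ℂ^{n²} × (ℂ^n)^s` equals `δ`: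
a generic multiprojective slice of type `γ` meets `W` in exactly `δ` points. -/
def hasMD {n s : ℕ} (W : Set (MIdx n s → ℂ)) (γ : Fin (s + 1) → ℕ) (δ : ℕ) : Prop :=
  ∃ U : Set (MSliceParam n s γ → ℂ), zOpen U ∧ zDense U ∧
    ∀ a ∈ U, (W ∩ mSlice γ a).ncard = δ

/-- The exponent vector of the monomial `h_0 · h_1^{n-1} ⋯ h_i^{n-2} ⋯ h_s^{n-1}`. -/
def specialExp (n s : ℕ) (i : Fin s) : Fin (s + 1) → ℕ :=
  fun j => if j = 0 then 1 else if j = i.succ then n - 2 else n - 1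

/-- `γ` lies in the box of admissible exponents of the Chow ring of `ℙ^{n²-1} × (ℙ^{n-1})^s`. -/
def inBox (n s : ℕ) (γ : Fin (s + 1) → ℕ) : Prop :=
  γ 0 < n ^ 2 ∧ ∀ j : Fin s, γ j.succ < n

/-- `representsClass W c q` : the polynomial `q` represents the Chow class of the
multiprojective variety with multicone `W`, of codimension `c`: its coefficients in the
admissible box in degree `c` are the multidegrees of `W`, and all other coefficients vanish. -/
def representsClass {n s : ℕ} (W : Set (MIdx n s → ℂ)) (c : ℕ)
    (q : MvPolynomial (Fin (s + 1)) ℤ) : Prop :=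
  (∀ γ : Fin (s + 1) → ℕ, inBox n s γ → (∑ j, γ j) = c →
      ∃ δ : ℕ, q.coeff (Finsupp.equivFunOnFinite.symm γ) = (δ : ℤ) ∧ hasMD W γ δ) ∧
  (∀ γ : Fin (s + 1) → ℕ, ¬ (inBox n s γ ∧ (∑ j, γ j) = c) →
      q.coeff (Finsupp.equivFunOnFinite.symm γ) = 0)

/-! ## The Chow ring of `ℙ^{n²-1} × (ℙ^{n-1})^s` -/

/-- The defining ideal of the Chow ring `ℤ[h_0, …, h_s]/(h_0^{n²}, h_1^n, …, h_s^n)`. -/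
def chowIdeal (n s : ℕ) : Ideal (MvPolynomial (Fin (s + 1)) ℤ) :=
  Ideal.span ({MvPolynomial.X 0 ^ n ^ 2} ∪
    Set.range fun j : Fin s => MvPolynomial.X j.succ ^ n)

/-- The Chow ring `A^*(ℙ_s) = ℤ[h_0, …, h_s]/(h_0^{n²}, h_1^n, …, h_s^n)`. -/
abbrev ChowRing (n s : ℕ) := MvPolynomial (Fin (s + 1)) ℤ ⧸ chowIdeal n s

/-- The variable substitution `h_0 ↦ t_0`, `h_i ↦ t_{q_i}` underlying `φ_P`. -/
def blockVarMap {s k : ℕ} (P : IdxPartition s k) : Fin (k + 1) → Fin (s + 1) :=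
  Fin.cases 0 fun i => (P.rep i).succ

lemma phiP_aux {n s k : ℕ} (P : IdxPartition s k) :
    ∀ a ∈ chowIdeal n k,
      ((Ideal.Quotient.mk (chowIdeal n s)).comp
        (MvPolynomial.rename (R := ℤ) (blockVarMap P)).toRingHom) a = 0 := by
  intro a ha
  rw [RingHom.comp_apply, Ideal.Quotient.eq_zero_iff_mem]
  have hmap : (MvPolynomial.rename (R := ℤ) (blockVarMap P)).toRingHom a ∈
      Ideal.map (MvPolynomial.rename (R := ℤ) (blockVarMap P)).toRingHom
        (chowIdeal n k) :=
    Ideal.mem_map_of_mem _ ha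
  have hle : Ideal.map
      (MvPolynomial.rename (R := ℤ) (blockVarMap P)).toRingHom
      (chowIdeal n k) ≤ chowIdeal n s := by
    rw [chowIdeal, Ideal.map_span, Ideal.span_le]
    rintro q ⟨p, hp, rfl⟩
    rcases hp with hp | ⟨j, rfl⟩
    · rw [Set.mem_singleton_iff] at hp
      subst hp
      simp only [AlgHom.toRingHom_eq_coe, RingHom.coe_coe, map_pow, MvPolynomial.rename_X,
        Fin.cases_zero]
      exact Ideal.subset_span (Or.inl rfl)
    · simp only [AlgHom.toRingHom_eq_coe, RingHom.coe_coe, map_pow, MvPolynomial.rename_X,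
        Fin.cases_succ]
      exact Ideal.subset_span (Or.inr ⟨P.rep j, rfl⟩)
  exact hle hmap

/-- The ring map `φ_P : A^*(ℙ_k) → A^*(ℙ_s)` sending `h_0 ↦ t_0` and `h_i ↦ t_{q_i}`. -/
def phiP (n : ℕ) {s k : ℕ} (P : IdxPartition s k) : ChowRing n k →+* ChowRing n s :=
  Ideal.Quotient.lift (chowIdeal n k)
    ((Ideal.Quotient.mk (chowIdeal n s)).comp
      (MvPolynomial.rename (R := ℤ) (blockVarMap P)).toRingHom)
    (phiP_aux P)



/-! ## Discriminants of characteristic polynomials -/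

/-- `∏_{i<j} (l i - l j)^2` for a list `l`. -/
def listPairProdSq (l : List ℂ) : ℂ :=
  ∏ p ∈ Finset.univ.filter (fun p : Fin l.length × Fin l.length => p.1 < p.2),
    (l.get p.1 - l.get p.2) ^ 2

/-- The product of the squared differences of all pairs of elements of a multiset; applied to
the multiset of roots of a characteristic polynomial this is the discriminant. -/
def pairProdSq (m : Multiset ℂ) : ℂ := listPairProdSq m.toList

/-- The coordinate vector (for the action of the symmetric power `ρ_d`) of the symmetric
product `v_1 ⋯ v_d` of the vectors `v i`: its `σ`-th coordinate is the coefficient of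
`t_1 ⋯ t_d` in `∏_k (∑_i t_i v i k)^{σ_k}`. -/
def symProdVec {n d : ℕ} (v : Fin d → Fin n → ℂ) : MonIdx n d → ℂ := fun σ =>
  MvPolynomial.coeff (Finsupp.equivFunOnFinite.symm fun _ : Fin d => 1)
    (∏ k : Fin n, (∑ i : Fin d, MvPolynomial.C (v i k) * MvPolynomial.X i) ^ (monExp σ k))

section proofMaterial
open Polynomial Matrix

lemma res_noroot {f g : ℂ[X]} {m d : ℕ} (hf : f.natDegree ≤ m) (hg : g.natDegree ≤ d) (hm : m ≠ 0)
    (h : resultant f g m d ≠ 0) {x : ℂ} (hx : f.eval x = 0) : g.eval x ≠ 0 := by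
  intro hgx
  obtain ⟨p, q, -, -, e⟩ := exists_mul_add_mul_eq_C_resultant f g hf hg (Or.inl hm)
  have := congrArg (Polynomial.eval x) e
  simp [hx, hgx] at this
  exact h this.symm

lemma res_ne {f g : ℂ[X]} {m d : ℕ} (hf : f.natDegree = m) (hf0 : f ≠ 0) (hg : g.natDegree ≤ d)
    (h : IsCoprime f g) : resultant f g m d ≠ 0 := by
  obtain ⟨k, rfl⟩ := Nat.exists_eq_add_of_le hg
  rw [resultant_add_right_deg _ _ _ _ _ le_rfl]
  subst hf
  refine mul_ne_zero (pow_ne_zero _ ?_) (resultant_ne_zero _ _ h)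
  simpa using hf0

/-- The (order one) Kalman matrix. -/
def kal {R : Type*} [CommRing R] {n : ℕ} (e : Fin n → R) (A : Matrix (Fin n) (Fin n) R) :
    Matrix (Fin n) (Fin n) R := Matrix.of fun r c => (e ᵥ* A ^ (r : ℕ)) c

lemma kal_map {R S : Type*} [CommRing R] [CommRing S] {n : ℕ} (φ : R →+* S) (e : Fin n → R)
    (A : Matrix (Fin n) (Fin n) R) :
    (kal e A).map φ = kal (fun i => φ (e i)) (A.map φ) := by
  ext r c
  have h : (A.map φ) ^ (r : ℕ) = (A ^ (r : ℕ)).map φ := by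
    have := map_pow φ.mapMatrix A (r : ℕ)
    simpa using this.symm
  simp [kal, h, Matrix.vecMul, dotProduct]

lemma kal_det_map {R S : Type*} [CommRing R] [CommRing S] {n : ℕ} (φ : R →+* S) (e : Fin n → R)
    (A : Matrix (Fin n) (Fin n) R) :
    φ (kal e A).det = (kal (fun i => φ (e i)) (A.map φ)).det := by
  rw [← kal_map, RingHom.map_det]; rfl

lemma pow_mulVec_eig {R : Type*} [CommRing R] {n : ℕ} {A : Matrix (Fin n) (Fin n) R}
    {v : Fin n → R} {l : R} (h : A *ᵥ v = l • v) (r : ℕ) : (A ^ r) *ᵥ v = l ^ r • v := by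
  induction r with
  | zero => simp
  | succ r ih => rw [pow_succ, ← Matrix.mulVec_mulVec, h, Matrix.mulVec_smul, ih, smul_smul,
      pow_succ, mul_comm]

lemma kal_mulVec {R : Type*} [CommRing R] {n : ℕ} {A : Matrix (Fin n) (Fin n) R} (e : Fin n → R)
    {v : Fin n → R} {l : R} (h : A *ᵥ v = l • v) (r : Fin n) :
    (kal e A *ᵥ v) r = l ^ (r : ℕ) * (e ⬝ᵥ v) := by
  have : (kal e A *ᵥ v) r = (e ᵥ* A ^ (r : ℕ)) ⬝ᵥ v := rfl
  rw [this, ← Matrix.dotProduct_mulVec, pow_mulVec_eig h, dotProduct_smul, smul_eq_mul]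

lemma kal_det_ne {n : ℕ} {A : Matrix (Fin n) (Fin n) ℂ} {e v : Fin n → ℂ} {l : ℂ}
    (h : A *ᵥ v = l • v) (hv : v ≠ 0) (hd : (kal e A).det ≠ 0) : e ⬝ᵥ v ≠ 0 := by
  intro he
  apply hd
  rw [← Matrix.exists_mulVec_eq_zero_iff]
  exact ⟨v, hv, by ext r; rw [kal_mulVec e h, he]; simp⟩

/-- eigenbasis formula -/
lemma kal_det_mul {R : Type*} [CommRing R] {n : ℕ} {A S : Matrix (Fin n) (Fin n) R} (e : Fin n → R)
    {l : Fin n → R} (h : ∀ m, A *ᵥ S.col m = l m • S.col m) :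
    (kal e A).det * S.det = (Matrix.vandermonde l).det * ∏ m, (e ⬝ᵥ S.col m) := by
  rw [← Matrix.det_mul, ← Matrix.det_transpose (Matrix.vandermonde l), ← Matrix.det_diagonal,
    ← Matrix.det_mul]
  congr 1
  ext r m
  rw [Matrix.mul_diagonal]
  have : (kal e A * S) r m = (kal e A *ᵥ S.col m) r := rfl
  rw [this, kal_mulVec e (h m)]
  simp [Matrix.vandermonde]

/-- diagonalisation data from separable characteristic polynomial -/
lemma exists_eigenbasis {n : ℕ} (A : Matrix (Fin n) (Fin n) ℂ)
    (h : ∀ x, A.charpoly.eval x = 0 → A.charpoly.derivative.eval x ≠ 0) :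
    ∃ (S : Matrix (Fin n) (Fin n) ℂ) (l : Fin n → ℂ), Function.Injective l ∧ S.det ≠ 0 ∧
      ∀ m, A *ᵥ S.col m = l m • S.col m := by
  have hsep : A.charpoly.Separable := by
    rw [Polynomial.Separable]
    rw [Polynomial.isCoprime_iff_aeval_ne_zero_of_isAlgClosed ℂ ℂ]
    intro x
    by_cases hx : A.charpoly.eval x = 0
    · right; simpa using h x hx
    · left; simpa using hx
  have hcard : A.charpoly.roots.toFinset.card = n := by
    rw [Multiset.toFinset_card_of_nodup (nodup_roots hsep),
      (IsAlgClosed.splits A.charpoly).natDegree_eq_card_roots.symm, A.charpoly_natDegree_eq_dim]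
    simp
  let E := (Finset.equivFinOfCardEq hcard).symm
  let l : Fin n → ℂ := fun m => (E m : ℂ)
  have hl : Function.Injective l := fun a b hab => E.injective (Subtype.ext hab)
  have hev : ∀ m, ∃ v, Module.End.HasEigenvector (Matrix.toLin' A) (l m) v := by
    intro m
    have h1 : l m ∈ A.charpoly.roots := Multiset.mem_toFinset.1 (E m).2
    have h2 : Module.End.HasEigenvalue (Matrix.toLin' A) (l m) := by
      rw [Module.End.hasEigenvalue_iff_isRoot_charpoly, Matrix.charpoly_toLin']
      exact isRoot_of_mem_roots h1
    exact h2.exists_hasEigenvector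
  choose v hv using hev
  have hli := Module.End.eigenvectors_linearIndependent' (Matrix.toLin' A) l hl v hv
  refine ⟨Matrix.of fun i j => v j i, l, hl, ?_, ?_⟩
  · have : IsUnit (Matrix.of fun i j => v j i)ᵀ := by
      rw [← Matrix.linearIndependent_rows_iff_isUnit]
      exact hli
    rw [Matrix.isUnit_iff_isUnit_det, Matrix.det_transpose] at this
    exact this.ne_zero
  · intro m
    have := (hv m).apply_eq_smul
    rw [Matrix.toLin'_apply] at this
    exact this

/-- eigenvectors in a simple eigenbasis -/
lemma eig_of_basis {n : ℕ} {A S : Matrix (Fin n) (Fin n) ℂ} {l : Fin n → ℂ}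
    (hl : Function.Injective l) (hS : S.det ≠ 0) (h : ∀ m, A *ᵥ S.col m = l m • S.col m)
    {v : Fin n → ℂ} (hv : v ≠ 0) {μ : ℂ} (hAv : A *ᵥ v = μ • v) :
    ∃ m, ∃ c : ℂ, c ≠ 0 ∧ μ = l m ∧ v = c • S.col m := by
  have hU : IsUnit S.det := isUnit_iff_ne_zero.2 hS
  set w := S⁻¹ *ᵥ v with hw
  have hvw : v = S *ᵥ w := by rw [hw, Matrix.mulVec_mulVec, Matrix.mul_nonsing_inv _ hU]; simp
  have hAS : A * S = S * Matrix.diagonal l := by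
    ext i j
    rw [Matrix.mul_diagonal]
    have := congrFun (h j) i
    have e : (A * S) i j = (A *ᵥ S.col j) i := rfl
    rw [e, this]; simp [mul_comm]
  have h1 : S *ᵥ (fun j => l j * w j) = S *ᵥ (fun j => μ * w j) := by
    have e1 : A *ᵥ v = S *ᵥ (fun j => l j * w j) := by
      rw [hvw, Matrix.mulVec_mulVec, hAS, ← Matrix.mulVec_mulVec]
      congr 1; ext j; rw [Matrix.mulVec_diagonal]
    rw [← e1, hAv, hvw, ← Matrix.mulVec_smul]; rfl
  have hinj : Function.Injective S.mulVec :=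
    Matrix.mulVec_injective_iff_isUnit.2 ((Matrix.isUnit_iff_isUnit_det _).2 hU)
  have h2 := hinj h1
  have hw0 : w ≠ 0 := by
    intro h0; apply hv; rw [hvw, h0]; simp
  obtain ⟨m, hm⟩ := Function.ne_iff.1 hw0
  have key : ∀ j, w j ≠ 0 → l j = μ := fun j hj => mul_right_cancel₀ hj (congrFun h2 j)
  refine ⟨m, w m, hm, (key m hm).symm, ?_⟩
  have : w = Pi.single m (w m) := by
    ext j
    by_cases hj : j = m
    · subst hj; simp
    · rw [Pi.single_eq_of_ne hj]
      by_contra hne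
      exact hj (hl ((key j hne).trans (key m hm).symm))
  rw [hvw, this, Matrix.mulVec_single]
  simp

lemma adj_zero_of_two {n : ℕ} {B : Matrix (Fin n) (Fin n) ℂ} {v w : Fin n → ℂ}
    (hli : LinearIndependent ℂ ![v, w]) (hv : B *ᵥ v = 0) (hw : B *ᵥ w = 0) : B.adjugate = 0 := by
  ext i j
  rw [Matrix.adjugate_apply, Matrix.zero_apply, ← Matrix.exists_mulVec_eq_zero_iff]
  rw [LinearIndependent.pair_iff] at hli
  have hupd : ∀ u : Fin n → ℂ, B *ᵥ u = 0 → u i = 0 →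
      (B.updateRow j (Pi.single i 1)) *ᵥ u = 0 := by
    intro u hu hui
    ext r
    by_cases hr : r = j
    · subst hr
      simp [Matrix.mulVec, hui]
    · have := congrFun hu r
      simpa [Matrix.mulVec, Matrix.updateRow_ne hr] using this
  by_cases h0 : v i = 0
  · refine ⟨v, ?_, hupd v hv h0⟩
    rintro rfl
    simpa using hli 1 0 (by simp)
  · refine ⟨(w i) • v + (- v i) • w, ?_, hupd _ ?_ ?_⟩
    · intro h
      have := (hli _ _ h).2
      exact h0 (by simpa using this)
    · rw [Matrix.mulVec_add, Matrix.mulVec_smul, Matrix.mulVec_smul, hv, hw]; simp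
    · simp; ring

/-- independent eigenvectors satisfy the adjugate equations -/
lemma adj_eq_zero {n : ℕ} {A : Matrix (Fin n) (Fin n) ℂ} {v w : Fin n → ℂ} {l μ : ℂ}
    (hli : LinearIndependent ℂ ![v, w]) (hv : A *ᵥ v = l • v) (hw : A *ᵥ w = μ • w) :
    (l • (1 : Matrix (Fin n) (Fin n) ℂ) - A).adjugate *ᵥ w = 0 := by
  have hBv : (l • (1 : Matrix (Fin n) (Fin n) ℂ) - A) *ᵥ v = 0 := by
    rw [Matrix.sub_mulVec, Matrix.smul_mulVec, hv]; simp
  have hBw : (l • (1 : Matrix (Fin n) (Fin n) ℂ) - A) *ᵥ w = (l - μ) • w := by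
    rw [Matrix.sub_mulVec, Matrix.smul_mulVec, hw, sub_smul]; simp
  by_cases h : l = μ
  · rw [adj_zero_of_two hli hBv (by rw [hBw, h]; simp)]; simp
  · have hd : (l • (1 : Matrix (Fin n) (Fin n) ℂ) - A).det = 0 :=
      Matrix.exists_mulVec_eq_zero_iff.1 ⟨v, hli.ne_zero 0, hBv⟩
    have h1 : (l • (1 : Matrix (Fin n) (Fin n) ℂ) - A).adjugate *ᵥ ((l - μ) • w) = 0 := by
      rw [← hBw, Matrix.mulVec_mulVec, Matrix.adjugate_mul, hd]; simp
    rw [Matrix.mulVec_smul] at h1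
    exact (smul_eq_zero.1 h1).resolve_left (sub_ne_zero.2 h)

lemma adj_ne_zero {n : ℕ} {A S : Matrix (Fin n) (Fin n) ℂ} {l : Fin n → ℂ}
    (hl : Function.Injective l) (hS : S.det ≠ 0) (h : ∀ m, A *ᵥ S.col m = l m • S.col m)
    (m : Fin n) : (l m • (1 : Matrix (Fin n) (Fin n) ℂ) - A).adjugate *ᵥ S.col m ≠ 0 := by
  intro h0
  have hAS : (l m • (1 : Matrix (Fin n) (Fin n) ℂ) - A) * S
      = S * Matrix.diagonal (fun j => l m - l j) := by
    ext i j
    rw [Matrix.mul_diagonal]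
    have := congrFun (h j) i
    have e : (A * S) i j = (A *ᵥ S.col j) i := rfl
    rw [Matrix.sub_mul, Matrix.sub_apply, e, this]; simp; ring
  have h1 := congrArg Matrix.adjugate hAS
  rw [Matrix.adjugate_mul_distrib, Matrix.adjugate_mul_distrib, Matrix.adjugate_diagonal] at h1
  have h2 := congrArg (fun M => M *ᵥ S.col m) h1
  simp only [← Matrix.mulVec_mulVec] at h2
  rw [h0] at h2
  have h3 : S.adjugate *ᵥ S.col m = Pi.single m S.det := by
    ext i
    have : (S.adjugate *ᵥ S.col m) i = (S.adjugate * S) i m := rfl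
    rw [this, Matrix.adjugate_mul]
    by_cases hi : i = m
    · subst hi; simp
    · simp [hi]
  rw [h3] at h2
  have h4 := congrFun h2 m
  rw [Matrix.mulVec_diagonal] at h4
  simp at h4
  rcases h4 with h4 | h4
  · rw [Finset.prod_eq_zero_iff] at h4
    obtain ⟨j, hj, hj0⟩ := h4
    have := hl (sub_eq_zero.1 hj0)
    simp [this] at hj
  · exact hS h4

lemma sq_dvd_det {R : Type*} [CommRing R] {n : ℕ} {M : Matrix (Fin n) (Fin n) R} {p : R}
    {m m' : Fin n} (hne : m ≠ m') (h : ∀ r, p ∣ M r m) (h' : ∀ r, p ∣ M r m') : p ^ 2 ∣ M.det := by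
  rw [Matrix.det_apply]
  refine Finset.dvd_sum fun σ _ => ?_
  refine dvd_smul_of_dvd _ ?_
  rw [← Finset.mul_prod_erase _ _ (Finset.mem_univ m),
    ← Finset.mul_prod_erase _ _ (Finset.mem_erase.2 ⟨hne.symm, Finset.mem_univ m'⟩), ← mul_assoc, sq]
  exact dvd_mul_of_dvd_left (mul_dvd_mul (h _) (h' _)) _

/-- the pencil of matrices -/
def penc {R : Type*} [CommRing R] {n : ℕ} (B0 B1 : Matrix (Fin n) (Fin n) R) :
    Matrix (Fin n) (Fin n) R[X] := Matrix.of fun i j => C (B0 i j) + X * C (B1 i j)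

/-- Kalman determinant of a pencil -/
def FF {R : Type*} [CommRing R] {n : ℕ} (e : Fin n → R) (B0 B1 : Matrix (Fin n) (Fin n) R) :
    R[X] := (kal (fun i => C (e i)) (penc B0 B1)).det

/-- discriminant of a pencil -/
def HH {R : Type*} [CommRing R] {n : ℕ} (B0 B1 : Matrix (Fin n) (Fin n) R) : R[X] :=
  resultant (penc B0 B1).charpoly (derivative (penc B0 B1).charpoly) n (n - 1)

lemma penc_map {R S : Type*} [CommRing R] [CommRing S] {n : ℕ} (φ : R →+* S)
    (B0 B1 : Matrix (Fin n) (Fin n) R) :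
    (penc B0 B1).map (Polynomial.mapRingHom φ) = penc (B0.map φ) (B1.map φ) := by
  ext1 i j; simp [penc]

lemma penc_eval {R : Type*} [CommRing R] {n : ℕ} (B0 B1 : Matrix (Fin n) (Fin n) R) (t : R) :
    (penc B0 B1).map (Polynomial.evalRingHom t) = B0 + t • B1 := by
  ext i j; simp [penc]; ring

lemma FF_map {R S : Type*} [CommRing R] [CommRing S] {n : ℕ} (φ : R →+* S) (e : Fin n → R)
    (B0 B1 : Matrix (Fin n) (Fin n) R) :
    (FF e B0 B1).map φ = FF (fun i => φ (e i)) (B0.map φ) (B1.map φ) := by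
  have := kal_det_map (Polynomial.mapRingHom φ) (fun i => C (e i)) (penc B0 B1)
  rw [penc_map] at this
  simpa [FF] using this

lemma FF_eval {R : Type*} [CommRing R] {n : ℕ} (e : Fin n → R) (B0 B1 : Matrix (Fin n) (Fin n) R)
    (t : R) : (FF e B0 B1).eval t = (kal e (B0 + t • B1)).det := by
  have := kal_det_map (Polynomial.evalRingHom t) (fun i => C (e i)) (penc B0 B1)
  rw [penc_eval] at this
  simpa [FF] using this

lemma HH_map {R S : Type*} [CommRing R] [CommRing S] {n : ℕ} (φ : R →+* S)
    (B0 B1 : Matrix (Fin n) (Fin n) R) :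
    (HH B0 B1).map φ = HH (B0.map φ) (B1.map φ) := by
  rw [HH, HH, ← penc_map, Matrix.charpoly_map, Polynomial.derivative_map, resultant_map_map]
  simp

lemma HH_eval {R : Type*} [CommRing R] {n : ℕ} (B0 B1 : Matrix (Fin n) (Fin n) R) (t : R) :
    (HH B0 B1).eval t = resultant (B0 + t • B1).charpoly (derivative (B0 + t • B1).charpoly)
      n (n - 1) := by
  rw [HH, ← penc_eval, Matrix.charpoly_map, Polynomial.derivative_map, resultant_map_map]
  simp

lemma penc_pow_natDegree {R : Type*} [CommRing R] {n : ℕ} (B0 B1 : Matrix (Fin n) (Fin n) R)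
    (r : ℕ) (i j : Fin n) : ((penc B0 B1 ^ r) i j).natDegree ≤ r := by
  induction r generalizing i j with
  | zero => 
    rw [pow_zero, Matrix.one_apply]; split_ifs <;> simp
  | succ r ih =>
    rw [pow_succ, Matrix.mul_apply]
    refine natDegree_sum_le_of_forall_le _ _ fun k _ => ?_
    refine natDegree_mul_le_of_le (ih _ _) ?_
    refine natDegree_add_le_of_degree_le (by simp) ?_
    refine (natDegree_mul_le_of_le natDegree_X_le (natDegree_C _).le)

lemma FF_natDegree {R : Type*} [CommRing R] {n : ℕ} (e : Fin n → R)
    (B0 B1 : Matrix (Fin n) (Fin n) R) : (FF e B0 B1).natDegree ≤ n.choose 2 := by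
  rw [FF, Matrix.det_apply]
  refine natDegree_sum_le_of_forall_le _ _ fun σ _ => ?_
  refine (natDegree_smul_le _ _).trans ?_
  refine (natDegree_prod_le _ _).trans ?_
  have : ∀ i, (kal (fun i => C (e i)) (penc B0 B1) (σ i) i).natDegree ≤ (σ i : ℕ) := by
    intro i
    simp only [kal, Matrix.of_apply, Matrix.vecMul, dotProduct]
    refine natDegree_sum_le_of_forall_le _ _ fun k _ => ?_
    refine (natDegree_C_mul_le _ _).trans (penc_pow_natDegree _ _ _ _ _)
  refine (Finset.sum_le_sum fun i _ => this i).trans ?_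
  rw [Equiv.sum_comp σ (fun i : Fin n => (i : ℕ)), Fin.sum_univ_eq_sum_range (fun i => i) n,
    Finset.sum_range_id, Nat.choose_two_right]

lemma FF_double {n : ℕ} {e : Fin n → ℂ} {B0 B1 S : Matrix (Fin n) (Fin n) ℂ} {t : ℂ}
    {l : Fin n → ℂ} (hS : S.det ≠ 0)
    (h : ∀ m, (B0 + t • B1) *ᵥ S.col m = l m • S.col m) {m m' : Fin n} (hne : m ≠ m')
    (hm : e ⬝ᵥ S.col m = 0) (hm' : e ⬝ᵥ S.col m' = 0) :
    (derivative (FF e B0 B1)).eval t = 0 := by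
  have key : ∀ m, e ⬝ᵥ S.col m = 0 → ∀ r,
      (X - C t) ∣ (kal (fun i => C (e i)) (penc B0 B1) * S.map C) r m := by
    intro m hm r
    rw [dvd_iff_isRoot, IsRoot]
    have h1 : (kal (fun i => C (e i)) (penc B0 B1)).map (Polynomial.evalRingHom t)
        = kal e (B0 + t • B1) := by
      rw [kal_map, penc_eval]; simp
    have h2 := kal_mulVec e (h m) r
    rw [hm, mul_zero, ← h1] at h2
    rw [Matrix.mul_apply, eval_finsetSum]
    simpa [Matrix.mulVec, dotProduct] using h2
  have h1 := sq_dvd_det hne (key m hm) (key m' hm')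
  rw [Matrix.det_mul] at h1
  have h2 : (S.map C).det = C S.det := by rw [RingHom.map_det]; rfl
  rw [h2] at h1
  have h3 : IsUnit (C S.det : ℂ[X]) := by simpa using hS
  rw [h3.dvd_mul_right] at h1
  obtain ⟨q, hq⟩ := h1
  rw [FF, hq]
  simp [derivative_mul, derivative_pow]

lemma card_pairs (n : ℕ) :
    ((Finset.univ : Finset (Fin n)).sigma (fun i => Finset.Ioi i)).card = n.choose 2 := by
  rw [Finset.card_sigma]
  simp only [Fin.card_Ioi]
  rw [Fin.sum_univ_eq_sum_range (fun i => n - 1 - i) n, Finset.sum_range_reflect (fun i => i) n,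
    Finset.sum_range_id, Nat.choose_two_right]

lemma kal_diag {R : Type*} [CommRing R] {n : ℕ} (x : Fin n → R) :
    (kal (fun _ => (1 : R)) (Matrix.diagonal x)).det = (Matrix.vandermonde x).det := by
  have := kal_det_mul (A := Matrix.diagonal x) (S := 1) (fun _ => (1 : R)) (l := x) (by
    intro m
    ext i
    rw [Matrix.mulVec_diagonal]
    by_cases hi : i = m
    · subst hi; simp
    · simp [hi])
  simpa [dotProduct, Matrix.one_apply] using this

lemma pow_two_pairs {i j i' j' : ℕ} (h : i < j) (h' : i' < j')
    (e : 2 ^ i + 2 ^ j = 2 ^ i' + 2 ^ j') : i = i' ∧ j = j' := by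
  have hj : j = j' := by
    by_contra hne
    rcases lt_or_gt_of_ne hne with hlt | hlt
    · have h1 : 2 ^ i < 2 ^ j := Nat.pow_lt_pow_right (by norm_num) h
      have h2 : 2 ^ (j + 1) ≤ 2 ^ j' := Nat.pow_le_pow_right (by norm_num) hlt
      rw [pow_succ] at h2
      have := Nat.pos_of_ne_zero (pow_ne_zero i' (two_ne_zero (α := ℕ)))
      omega
    · have h1 : 2 ^ i' < 2 ^ j' := Nat.pow_lt_pow_right (by norm_num) h'
      have h2 : 2 ^ (j' + 1) ≤ 2 ^ j := Nat.pow_le_pow_right (by norm_num) hlt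
      rw [pow_succ] at h2
      have := Nat.pos_of_ne_zero (pow_ne_zero i (two_ne_zero (α := ℕ)))
      omega
  subst hj
  exact ⟨Nat.pow_right_injective (le_refl 2) (by simpa using e), rfl⟩

lemma witness_a (n : ℕ) (D : ℂ) (hD : D ≠ 0) :
    let F := FF (fun _ => (1 : ℂ)) (D • Matrix.diagonal (fun j : Fin n => ((2 : ℂ) ^ (j : ℕ)) ^ 2 - 1))
      (D • Matrix.diagonal (fun j : Fin n => (2 : ℂ) ^ (j : ℕ)))
    F.natDegree = n.choose 2 ∧ F ≠ 0 ∧ IsCoprime F (derivative F) := by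
  intro F
  set a : Fin n → ℂ := fun j => (2 : ℂ) ^ (j : ℕ) with ha
  have hinj : Function.Injective a := by
    intro i j hij
    have : (2 : ℕ) ^ (i : ℕ) = 2 ^ (j : ℕ) := by simp only [ha] at hij; exact_mod_cast hij
    exact Fin.ext (Nat.pow_right_injective (le_refl 2) this)
  have hF : F = (Matrix.vandermonde (fun j => C (D * (a j ^ 2 - 1)) + X * C (D * a j))).det := by
    rw [← kal_diag]
    simp only [F, FF]
    congr 2
    ext1 i j
    by_cases hij : i = j
    · subst hij; simp [penc, ha]
    · simp [penc, hij]
  have hF2 : F = C (∏ p ∈ (Finset.univ : Finset (Fin n)).sigma (fun i => Finset.Ioi i),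
      (D * (a p.2 - a p.1))) *
      ∏ p ∈ (Finset.univ : Finset (Fin n)).sigma (fun i => Finset.Ioi i),
        (X - C (-(a p.1 + a p.2))) := by
    rw [hF, Matrix.det_vandermonde, map_prod, ← Finset.prod_mul_distrib, Finset.prod_sigma]
    refine Finset.prod_congr rfl fun i _ => Finset.prod_congr rfl fun j _ => ?_
    simp only [map_mul, map_sub, map_add, map_neg, map_pow, map_one]
    ring
  have hκ : (∏ p ∈ (Finset.univ : Finset (Fin n)).sigma (fun i => Finset.Ioi i),
      (D * (a p.2 - a p.1))) ≠ 0 := by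
    rw [Finset.prod_ne_zero_iff]
    rintro ⟨i, j⟩ hp
    have hij : i < j := by simpa using hp
    exact mul_ne_zero hD (sub_ne_zero.2 (fun h => hij.ne' (hinj h)))
  set κ := (∏ p ∈ (Finset.univ : Finset (Fin n)).sigma (fun i => Finset.Ioi i),
      (D * (a p.2 - a p.1)))
  have hsep : (∏ p ∈ (Finset.univ : Finset (Fin n)).sigma (fun i => Finset.Ioi i),
        (X - C (-(a p.1 + a p.2)))).Separable := by
    rw [separable_prod_X_sub_C_iff']
    rintro ⟨i, j⟩ hp ⟨i', j'⟩ hp' h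
    have hij : i < j := by simpa using hp
    have hij' : i' < j' := by simpa using hp'
    have h1 : a i + a j = a i' + a j' := neg_injective h
    have h2 : (2 : ℕ) ^ (i : ℕ) + 2 ^ (j : ℕ) = 2 ^ (i' : ℕ) + 2 ^ (j' : ℕ) := by
      simp only [ha] at h1; exact_mod_cast h1
    obtain ⟨h3, h4⟩ := pow_two_pairs hij hij' h2
    have h3 := Fin.ext h3
    have h4 := Fin.ext h4
    subst h3; subst h4; rfl
  have hsepF : F.Separable := by
    rw [hF2]
    exact hsep.unit_mul (by simpa using hκ)
  refine ⟨?_, hsepF.ne_zero, hsepF⟩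
  rw [hF2, natDegree_C_mul hκ, natDegree_prod_of_monic _ _ (fun p _ => monic_X_sub_C _)]
  simp only [natDegree_X_sub_C, Finset.sum_const, card_pairs, smul_eq_mul, mul_one]

/-- The second witness direction. -/
def wB1 (n : ℕ) : Matrix (Fin n) (Fin n) ℂ := Matrix.of fun i j =>
  if (i : ℕ) = 0 ∧ (j : ℕ) = 0 then 1 else if (j : ℕ) = i + 1 then 1 else 0

lemma witness_b_FF (n : ℕ) (hn : 0 < n) (D : ℂ) :
    FF (Pi.single ⟨0, hn⟩ (1 : ℂ)) (D • Matrix.diagonal (fun j : Fin n => (j : ℂ))) (D • wB1 n)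
     = C (D ^ n.choose 2) * X ^ n.choose 2 := by
  set A := penc (D • Matrix.diagonal (fun j : Fin n => (j : ℂ))) (D • wB1 n) with hA
  have hA0 : ∀ i j : Fin n, (i : ℕ) + 1 < j → A i j = 0 := by
    intro i j hij
    have h1 : i ≠ j := by rintro rfl; omega
    have h2 : ¬ ((i : ℕ) = 0 ∧ (j : ℕ) = 0) := by omega
    have h3 : ¬ ((j : ℕ) = i + 1) := by omega
    simp only [hA, penc, wB1, Matrix.of_apply, Matrix.smul_apply, h2, h3, if_false, Matrix.diagonal_apply_ne _ h1]
    simp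
  have hA1 : ∀ i j : Fin n, (j : ℕ) = i + 1 → A i j = C D * X := by
    intro i j hij
    have h1 : i ≠ j := by rintro rfl; omega
    have h2 : ¬ ((i : ℕ) = 0 ∧ (j : ℕ) = 0) := by omega
    simp only [hA, penc, wB1, Matrix.of_apply, Matrix.smul_apply, hij, if_true, Matrix.diagonal_apply_ne _ h1]
    simp
  have key : ∀ r : ℕ, ∀ c : Fin n, (r < (c : ℕ) → (A ^ r) ⟨0, hn⟩ c = 0) ∧
      ((c : ℕ) = r → (A ^ r) ⟨0, hn⟩ c = (C D * X) ^ r) := by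
    intro r
    induction r with
    | zero =>
      intro c
      refine ⟨fun h => ?_, fun h => ?_⟩
      · rw [pow_zero, Matrix.one_apply_ne]; rintro rfl; simp at h
      · have : c = ⟨0, hn⟩ := Fin.ext h
        simp [this]
    | succ r ih =>
      intro c
      rw [pow_succ, Matrix.mul_apply]
      refine ⟨fun h => ?_, fun h => ?_⟩
      · refine Finset.sum_eq_zero fun k _ => ?_
        by_cases hk : r < (k : ℕ)
        · rw [(ih k).1 hk, zero_mul]
        · rw [hA0 k c (by omega), mul_zero]
      · rw [Finset.sum_eq_single (⟨r, by omega⟩ : Fin n)]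
        · rw [(ih _).2 rfl, hA1 _ _ h]; ring
        · intro k _ hk
          have hk' : (k : ℕ) ≠ r := fun h => hk (Fin.ext h)
          by_cases hk2 : r < (k : ℕ)
          · rw [(ih k).1 hk2, zero_mul]
          · rw [hA0 k c (by omega), mul_zero]
        · simp
  have hK : ∀ r c : Fin n, kal (fun i => C ((Pi.single ⟨0, hn⟩ (1 : ℂ) : Fin n → ℂ) i)) A r c = (A ^ (r : ℕ)) ⟨0, hn⟩ c := by
    intro r c
    simp only [kal, Matrix.of_apply, Matrix.vecMul, dotProduct]
    rw [Finset.sum_eq_single ⟨0, hn⟩]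
    · simp
    · intro b _ hb; simp [hb]
    · simp
  rw [FF, ← hA, Matrix.det_of_isLowerTriangular]
  · simp only [hK]
    rw [Finset.prod_congr rfl (fun (r : Fin n) _ => ((key (r : ℕ) r).2 rfl)), Finset.prod_pow_eq_pow_sum,
      Fin.sum_univ_eq_sum_range (fun i => i) n, Finset.sum_range_id, Nat.choose_two_right, mul_pow,
      C_pow]
  · intro r c hrc
    rw [hK]
    exact (key r c).1 (by simpa using hrc)

lemma witness_b (n s : ℕ) (hn : 0 < n) (D : ℂ) (hD : D ≠ 0) :
    let B0 := (D • Matrix.diagonal (fun j : Fin n => (j : ℂ)))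
    let F := FF (Pi.single ⟨0, hn⟩ (1 : ℂ)) B0 (D • wB1 n)
    F.natDegree = n.choose 2 ∧ F ≠ 0 ∧
      IsCoprime F (HH B0 (D • wB1 n) * ∏ _j : Fin s, FF (fun _ => (1 : ℂ)) B0 (D • wB1 n)) := by
  intro B0 F
  have hF : F = C (D ^ n.choose 2) * X ^ n.choose 2 := witness_b_FF n hn D
  have hDn : D ^ n.choose 2 ≠ 0 := pow_ne_zero _ hD
  have hB0 : B0 = Matrix.diagonal (fun j : Fin n => D * (j : ℂ)) := by
    ext i j
    by_cases hij : i = j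
    · subst hij; simp [B0]
    · simp [B0, hij]
  have hinj : Function.Injective (fun j : Fin n => D * (j : ℂ)) := by
    intro i j hij
    have := mul_left_cancel₀ hD hij
    exact Fin.ext (by exact_mod_cast this)
  refine ⟨?_, ?_, ?_⟩
  · rw [hF, natDegree_C_mul_X_pow _ _ hDn]
  · rw [hF]; exact mul_ne_zero (by simpa using hDn) (pow_ne_zero _ X_ne_zero)
  · rw [hF, isCoprime_mul_unit_left_left (isUnit_C.2 hDn.isUnit)]
    apply IsCoprime.pow_left
    have : (X : ℂ[X]) = X - C 0 := by simp
    rw [this]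
    refine (Polynomial.irreducible_X_sub_C (0 : ℂ)).coprime_iff_not_dvd.2 ?_
    rw [dvd_iff_isRoot, IsRoot, eval_mul, eval_prod, HH_eval, FF_eval]
    have hz : B0 + (0 : ℂ) • (D • wB1 n) = Matrix.diagonal (fun j : Fin n => D * (j : ℂ)) := by
      rw [zero_smul, add_zero, hB0]
    rw [hz]
    refine mul_ne_zero ?_ ?_
    · have hc : (Matrix.diagonal (fun j : Fin n => D * (j : ℂ))).charpoly = ∏ j : Fin n, (X - C (D * (j : ℂ))) := by
        rw [Matrix.charpoly_diagonal]
      have hs : (Matrix.diagonal (fun j : Fin n => D * (j : ℂ))).charpoly.Separable := by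
        rw [hc, separable_prod_X_sub_C_iff]; exact hinj
      refine res_ne ?_ hs.ne_zero ?_ hs
      · rw [Matrix.charpoly_natDegree_eq_dim]; simp
      · refine (natDegree_derivative_le _).trans ?_
        rw [Matrix.charpoly_natDegree_eq_dim]; simp
    · rw [Finset.prod_ne_zero_iff]
      intro _ _
      rw [kal_diag]
      exact Matrix.det_vandermonde_ne_zero_iff.2 hinj

/-- What we need from a generic pencil. -/
structure GoodPencil {n s : ℕ} (B0 B1 : Matrix (Fin n) (Fin n) ℂ) (e : Fin n → ℂ)
    (c : Fin s → Fin n → ℂ) : Prop where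
  deg : (FF e B0 B1).natDegree = n.choose 2
  simple : ∀ t, (FF e B0 B1).eval t = 0 → (derivative (FF e B0 B1)).eval t ≠ 0
  disc : ∀ t, (FF e B0 B1).eval t = 0 → ∀ x, (B0 + t • B1).charpoly.eval x = 0 →
    (derivative (B0 + t • B1).charpoly).eval x ≠ 0
  norm : ∀ t, (FF e B0 B1).eval t = 0 → ∀ j, (kal (c j) (B0 + t • B1)).det ≠ 0

theorem generic_pencil {σ : Type*} {n s : ℕ} (hn : 2 ≤ n)
    (B0 B1 : Matrix (Fin n) (Fin n) (MvPolynomial σ ℂ)) (e : Fin n → MvPolynomial σ ℂ)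
    (c : Fin s → Fin n → MvPolynomial σ ℂ) 
    (wit : ∀ (A0 A1 : Matrix (Fin n) (Fin n) ℂ) (e' : Fin n → ℂ),
      A0 ⟨0, by omega⟩ ⟨0, by omega⟩ = 0 → A1 ⟨0, by omega⟩ ⟨0, by omega⟩ = 1 →
      ∃ (a : σ → ℂ) (D : ℂ), D ≠ 0 ∧ B0.map (MvPolynomial.eval a) = D • A0 ∧
        B1.map (MvPolynomial.eval a) = D • A1 ∧ (fun i => MvPolynomial.eval a (e i)) = e' ∧
        ∀ j i, MvPolynomial.eval a (c j i) = 1) :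
    ∃ G : MvPolynomial σ ℂ, G ≠ 0 ∧ ∀ a, MvPolynomial.eval a G ≠ 0 →
      GoodPencil (B0.map (MvPolynomial.eval a)) (B1.map (MvPolynomial.eval a))
        (fun i => MvPolynomial.eval a (e i)) (fun j i => MvPolynomial.eval a (c j i)) := by
  set N := n.choose 2 with hN
  have hN0 : N ≠ 0 := (Nat.choose_pos hn).ne'
  set F := FF e B0 B1 with hF
  set H := HH B0 B1 * ∏ j, FF (c j) B0 B1 with hH
  have hFm : ∀ a, F.map (MvPolynomial.eval a) = FF (fun i => MvPolynomial.eval a (e i))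
      (B0.map (MvPolynomial.eval a)) (B1.map (MvPolynomial.eval a)) := fun a => FF_map _ _ _ _
  have hHm : ∀ a, H.map (MvPolynomial.eval a) =
      HH (B0.map (MvPolynomial.eval a)) (B1.map (MvPolynomial.eval a)) *
      ∏ j, FF (fun i => MvPolynomial.eval a (c j i))
      (B0.map (MvPolynomial.eval a)) (B1.map (MvPolynomial.eval a)) := by
    intro a
    rw [hH, Polynomial.map_mul, Polynomial.map_prod, HH_map]
    simp only [FF_map]
  have hdF : ∀ a, (F.map (MvPolynomial.eval a)).natDegree ≤ N := by
    intro a; rw [hFm]; exact FF_natDegree _ _ _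
  have hdH : ∀ a, (H.map (MvPolynomial.eval a)).natDegree ≤ H.natDegree :=
    fun a => natDegree_map_le
  have hdF' : ∀ a, (derivative (F.map (MvPolynomial.eval a))).natDegree ≤ N - 1 :=
    fun a => (natDegree_derivative_le _).trans (Nat.sub_le_sub_right (hdF a) 1)
  set R1 := resultant F (derivative F) N (N - 1) with hR1
  set R2 := resultant F H N H.natDegree with hR2
  have hR1m : ∀ a, MvPolynomial.eval a R1 = resultant (F.map (MvPolynomial.eval a))
      (derivative (F.map (MvPolynomial.eval a))) N (N - 1) := by
    intro a; rw [Polynomial.derivative_map, resultant_map_map]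
  have hR2m : ∀ a, MvPolynomial.eval a R2 = resultant (F.map (MvPolynomial.eval a))
      (H.map (MvPolynomial.eval a)) N H.natDegree := by
    intro a; rw [resultant_map_map]
  have hne1 : F.coeff N * R1 ≠ 0 := by
    obtain ⟨a, D, hD, h0, h1, h2, h3⟩ := wit
      (Matrix.diagonal (fun j : Fin n => ((2 : ℂ) ^ (j : ℕ)) ^ 2 - 1))
      (Matrix.diagonal (fun j : Fin n => (2 : ℂ) ^ (j : ℕ))) (fun _ => 1) (by simp) (by simp)
    obtain ⟨w1, w2, w3⟩ := witness_a n D hD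
    rw [← h0, ← h1, ← h2, ← hFm] at w1 w2 w3
    intro h
    have := congrArg (MvPolynomial.eval a) h
    rw [map_mul, map_zero, hR1m] at this
    rcases mul_eq_zero.1 this with h | h
    · rw [← Polynomial.coeff_map, hN, ← w1] at h
      exact w2 (leadingCoeff_eq_zero.1 h)
    · exact res_ne w1 w2 (hdF' a) w3 h
  have hne2 : R2 ≠ 0 := by
    obtain ⟨a, D, hD, h0, h1, h2, h3⟩ := wit
      (Matrix.diagonal (fun j : Fin n => (j : ℂ))) (wB1 n) (Pi.single ⟨0, by omega⟩ (1 : ℂ))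
      (by simp) (by simp [wB1])
    obtain ⟨w1, w2, w3⟩ := witness_b n s (by omega) D hD
    have h4 : H.map (MvPolynomial.eval a) = _ := hHm a
    simp only [h3] at h4
    rw [← h0, ← h1, ← h4] at w3
    rw [← h0, ← h1] at w1 w2
    rw [← h2, ← hFm] at w1 w2 w3
    intro h
    have := congrArg (MvPolynomial.eval a) h
    rw [map_zero, hR2m] at this
    exact res_ne w1 w2 (hdH a) w3 this
  refine ⟨F.coeff N * R1 * R2, mul_ne_zero hne1 hne2, fun a ha => ?_⟩
  rw [map_mul, map_mul, hR1m, hR2m] at ha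
  obtain ⟨⟨ha1, ha2⟩, ha3⟩ : (_ ∧ _) ∧ _ := by
    exact ⟨⟨left_ne_zero_of_mul (left_ne_zero_of_mul ha), right_ne_zero_of_mul (left_ne_zero_of_mul ha)⟩, right_ne_zero_of_mul ha⟩
  have k3 : ∀ t, (F.map (MvPolynomial.eval a)).eval t = 0 → (H.map (MvPolynomial.eval a)).eval t ≠ 0 :=
    fun t ht => res_noroot (hdF a) (hdH a) hN0 ha3 ht
  rw [hFm, hHm] at k3
  constructor
  · rw [← hFm]
    refine le_antisymm (hdF a) (le_natDegree_of_ne_zero ?_)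
    rwa [Polynomial.coeff_map]
  · rw [← hFm]
    exact fun t ht => res_noroot (hdF a) (hdF' a) hN0 ha2 ht
  · intro t ht x hx
    have := k3 t ht
    rw [eval_mul, HH_eval] at this
    refine res_noroot ?_ ?_ (by omega) (left_ne_zero_of_mul this) hx
    · rw [Matrix.charpoly_natDegree_eq_dim]; simp
    · refine (natDegree_derivative_le _).trans ?_
      rw [Matrix.charpoly_natDegree_eq_dim]; simp
  · intro t ht j
    have := k3 t ht
    rw [eval_mul, eval_prod] at this
    have := Finset.prod_ne_zero_iff.1 (right_ne_zero_of_mul this) j (Finset.mem_univ j)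
    rwa [FF_eval] at this

lemma zBasis (ι : Type*) : @TopologicalSpace.IsTopologicalBasis _ (zTop ι)
    {U | ∃ p : MvPolynomial ι ℂ, U = {x | MvPolynomial.eval x p ≠ 0}} := by
  letI := zTop ι
  refine ⟨?_, ?_, rfl⟩
  · rintro _ ⟨p, rfl⟩ _ ⟨q, rfl⟩ x ⟨hx1, hx2⟩
    refine ⟨_, ⟨p * q, rfl⟩, ?_, ?_⟩
    · simpa using ⟨hx1, hx2⟩
    · intro y hy
      simpa using hy
  · refine Set.eq_univ_of_forall fun x => ⟨_, ⟨1, rfl⟩, by simp⟩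

lemma zOpen_basic {ι : Type*} (G : MvPolynomial ι ℂ) : zOpen {x | MvPolynomial.eval x G ≠ 0} :=
  TopologicalSpace.isOpen_generateFrom_of_mem ⟨G, rfl⟩

lemma zDense_basic {ι : Type*} (G : MvPolynomial ι ℂ) (hG : G ≠ 0) :
    zDense {x | MvPolynomial.eval x G ≠ 0} := by
  letI := zTop ι
  refine (zBasis ι).dense_iff.2 ?_
  rintro _ ⟨p, rfl⟩ ⟨x, hx⟩
  have hp : p ≠ 0 := by rintro rfl; simp at hx
  have hpG : p * G ≠ 0 := mul_ne_zero hp hG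
  by_contra hemp
  apply hpG
  apply MvPolynomial.funext
  intro y
  by_contra hy
  apply hemp
  refine ⟨y, ?_, ?_⟩ <;> simp only [map_mul, map_zero] at hy
  · exact left_ne_zero_of_mul hy
  · exact right_ne_zero_of_mul hy

lemma zClosure_vanish {ι : Type*} {S : Set (ι → ℂ)} (p : MvPolynomial ι ℂ)
    (h : ∀ x ∈ S, MvPolynomial.eval x p = 0) {x : ι → ℂ} (hx : x ∈ zClosure S) :
    MvPolynomial.eval x p = 0 := by
  letI := zTop ι
  have hc : IsClosed {x : ι → ℂ | MvPolynomial.eval x p = 0} := by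
    rw [← isOpen_compl_iff]
    exact zOpen_basic p
  exact closure_minimal (s := S) (t := {x : ι → ℂ | MvPolynomial.eval x p = 0}) h hc hx

lemma subset_zClosure {ι : Type*} {S : Set (ι → ℂ)} {x : ι → ℂ} (hx : x ∈ S) : x ∈ zClosure S := by
  letI := zTop ι
  exact subset_closure (s := S) hx

/-- generic matrix and vectors -/
def gA (n s : ℕ) : Matrix (Fin n) (Fin n) (MvPolynomial (MIdx n s) ℂ) :=
  Matrix.of fun i j => MvPolynomial.X (Sum.inl (i, j))

/-- generic vectors -/
def gv (n s : ℕ) (p : Fin s) : Fin n → MvPolynomial (MIdx n s) ℂ :=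
  fun q => MvPolynomial.X (Sum.inr (p, q))

lemma gA_eval {n s : ℕ} (x : MIdx n s → ℂ) :
    (gA n s).map (MvPolynomial.eval x) = toMat (matPart x) := by
  ext i j; simp [gA, toMat, matPart]

lemma gv_eval {n s : ℕ} (x : MIdx n s → ℂ) (p : Fin s) (q : Fin n) :
    MvPolynomial.eval x (gv n s p q) = vecPart x p q := by
  simp [gv, vecPart]

lemma mulVec_eval {n : ℕ} {ι : Type*} (x : ι → ℂ) (M : Matrix (Fin n) (Fin n) (MvPolynomial ι ℂ))
    (v : Fin n → MvPolynomial ι ℂ) (a : Fin n) :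
    MvPolynomial.eval x ((M *ᵥ v) a) =
      (M.map (MvPolynomial.eval x) *ᵥ (fun q => MvPolynomial.eval x (v q))) a := by
  simp [Matrix.mulVec, dotProduct]

section closedconds
variable {n s k : ℕ} {P : IdxPartition s k} {x : MIdx n s → ℂ}

lemma W_eig (hx : x ∈ WsPcone n P) (j : Fin s) (p q : Fin n) :
    (toMat (matPart x) *ᵥ vecPart x j) p * vecPart x j q =
    (toMat (matPart x) *ᵥ vecPart x j) q * vecPart x j p := by
  have := zClosure_vanish ((gA n s *ᵥ gv n s j) p * gv n s j q - (gA n s *ᵥ gv n s j) q * gv n s j p)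
    (by
      rintro y ⟨⟨-, hy⟩, -⟩
      obtain ⟨-, l, hl⟩ := hy j
      simp only [map_sub, map_mul, mulVec_eval, gA_eval, gv_eval]
      change (toMat (matPart y) *ᵥ vecPart y j) p * _ - (toMat (matPart y) *ᵥ vecPart y j) q * _ = 0
      rw [hl]; simp; ring) hx
  simp only [map_sub, map_mul, mulVec_eval, gA_eval, gv_eval] at this
  exact sub_eq_zero.1 this

lemma W_block (hx : x ∈ WsPcone n P) (i : Fin k) {p q : Fin s} (hp : p ∈ P.block i)
    (hq : q ∈ P.block i) (a b : Fin n) :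
    vecPart x p a * vecPart x q b = vecPart x p b * vecPart x q a := by
  have := zClosure_vanish (gv n s p a * gv n s q b - gv n s p b * gv n s q a)
    (by
      rintro y ⟨-, -, hy, -⟩
      obtain ⟨c, hc⟩ := hy i p hp q hq
      simp only [map_sub, map_mul, gv_eval]
      simp only at hc
      rw [hc]; simp; ring) hx
  simp only [map_sub, map_mul, gv_eval] at this
  exact sub_eq_zero.1 this

lemma adj_eval {n s : ℕ} (y : MIdx n s → ℂ) (p q : Fin s) (a b : Fin n) :
    MvPolynomial.eval y (((((gA n s *ᵥ gv n s p) a) •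
      (1 : Matrix (Fin n) (Fin n) (MvPolynomial (MIdx n s) ℂ)) - gv n s p a • gA n s).adjugate *ᵥ
        gv n s q) b) =
    ((((toMat (matPart y) *ᵥ vecPart y p) a) • (1 : Matrix (Fin n) (Fin n) ℂ)
      - vecPart y p a • toMat (matPart y)).adjugate *ᵥ vecPart y q) b := by
  rw [mulVec_eval]
  simp only [gv_eval]
  have h := RingHom.map_adjugate (MvPolynomial.eval y) (((gA n s *ᵥ gv n s p) a) •
      (1 : Matrix (Fin n) (Fin n) (MvPolynomial (MIdx n s) ℂ)) - gv n s p a • gA n s)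
  rw [RingHom.mapMatrix_apply, RingHom.mapMatrix_apply] at h
  rw [h]
  congr 3
  have h2 : MvPolynomial.eval y ((gA n s *ᵥ gv n s p) a) = (toMat (matPart y) *ᵥ vecPart y p) a := by
    rw [mulVec_eval, gA_eval]; simp only [gv_eval]
  rw [← h2, ← gA_eval]
  ext i j
  by_cases hij : i = j
  · subst hij; simp [gv_eval]
  · simp [gv_eval, hij]

lemma W_adj (hx : x ∈ WsPcone n P) {i i' : Fin k} (hii : i ≠ i') {p q : Fin s} (hp : p ∈ P.block i)
    (hq : q ∈ P.block i') (a b : Fin n) :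
    ((((toMat (matPart x) *ᵥ vecPart x p) a) • (1 : Matrix (Fin n) (Fin n) ℂ)
      - vecPart x p a • toMat (matPart x)).adjugate *ᵥ vecPart x q) b = 0 := by
  rw [← adj_eval]
  refine zClosure_vanish _ ?_ hx
  rintro y ⟨⟨-, hy⟩, -, -, hli⟩
  rw [adj_eval]
  obtain ⟨-, l, hl⟩ := hy p
  obtain ⟨-, m, hm⟩ := hy q
  classical
  have hli2 : LinearIndependent ℂ ![vecPart y p, vecPart y q] := by
    have h1 := hli (fun j => if j = i then p else if j = i' then q else P.rep j) (by
      intro j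
      by_cases h1 : j = i
      · subst h1; simpa using hp
      · by_cases h2 : j = i'
        · subst h2; simpa [h1] using hq
        · simp only [h1, h2, if_false]; exact Finset.min'_mem _ _)
    have h2 := h1.comp ![i, i'] (by
      intro u v huv
      fin_cases u <;> fin_cases v <;> simp_all)
    convert h2 using 1
    ext u
    fin_cases u
    · simp
    · simp [hii.symm]
  have e : ((toMat (matPart y) *ᵥ vecPart y p) a) • (1 : Matrix (Fin n) (Fin n) ℂ)
      - vecPart y p a • toMat (matPart y) = vecPart y p a • (l • 1 - toMat (matPart y)) := by
    have : (toMat (matPart y) *ᵥ vecPart y p) a = vecPart y p a * l := by rw [hl]; simp [mul_comm]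
    rw [this, smul_sub, smul_smul]
  rw [e, Matrix.adjugate_smul, Matrix.smul_mulVec, adj_eq_zero hli2 hl hm]
  simp

end closedconds

lemma eig_of_minors {n : ℕ} {A : Matrix (Fin n) (Fin n) ℂ} {v : Fin n → ℂ} (hv : v ≠ 0)
    (h : ∀ p q, (A *ᵥ v) p * v q = (A *ᵥ v) q * v p) : ∃ l : ℂ, A *ᵥ v = l • v := by
  obtain ⟨q, hq⟩ := Function.ne_iff.1 hv
  refine ⟨(A *ᵥ v) q / v q, ?_⟩
  ext p
  have := h p q
  simp at hq
  rw [Pi.smul_apply, smul_eq_mul, div_mul_eq_mul_div, eq_div_iff hq, this]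

lemma eig_uniq {n : ℕ} {A : Matrix (Fin n) (Fin n) ℂ} {v : Fin n → ℂ} (hv : v ≠ 0) {l m : ℂ}
    (h : A *ᵥ v = l • v) (h' : A *ᵥ v = m • v) : l = m :=
  smul_left_injective ℂ hv (h.symm.trans h')

lemma col_ne {n : ℕ} {S : Matrix (Fin n) (Fin n) ℂ} (hS : S.det ≠ 0) (m : Fin n) : S.col m ≠ 0 := by
  intro h
  exact hS (Matrix.det_eq_zero_of_column_eq_zero m (fun i => congrFun h i))

lemma col_li {n : ℕ} {S : Matrix (Fin n) (Fin n) ℂ} (hS : S.det ≠ 0) :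
    LinearIndependent ℂ S.col :=
  Matrix.linearIndependent_cols_iff_isUnit.2 ((Matrix.isUnit_iff_isUnit_det _).2 hS.isUnit)

/-- block index -/
def IdxPartition.idx {s k : ℕ} (P : IdxPartition s k) (p : Fin s) : Fin k := (P.cover p).choose

lemma IdxPartition.mem_idx {s k : ℕ} (P : IdxPartition s k) (p : Fin s) : p ∈ P.block (P.idx p) :=
  (P.cover p).choose_spec

lemma IdxPartition.idx_eq {s k : ℕ} (P : IdxPartition s k) {p : Fin s} {i : Fin k}
    (h : p ∈ P.block i) : P.idx p = i := by
  by_contra hne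
  exact Finset.disjoint_left.1 (P.disj _ _ hne) (P.mem_idx p) h

lemma mem_W_iff {n s k : ℕ} (hn : 2 ≤ n) (P : IdxPartition s k) (x : MIdx n s → ℂ)
    {S : Matrix (Fin n) (Fin n) ℂ} {l : Fin n → ℂ} (hl : Function.Injective l) (hS : S.det ≠ 0)
    (h : ∀ m, toMat (matPart x) *ᵥ S.col m = l m • S.col m) (hv : ∀ j, vecPart x j ≠ 0) :
    x ∈ WsPcone n P ↔ ∃ φ : Fin k ↪ Fin n, ∀ j, ∃ c : ℂ, c ≠ 0 ∧
      vecPart x j = c • S.col (φ (P.idx j)) := by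
  constructor
  · intro hx
    have h1 : ∀ j, ∃ m, ∃ c : ℂ, c ≠ 0 ∧ vecPart x j = c • S.col m := by
      intro j
      obtain ⟨μ, hμ⟩ := eig_of_minors (hv j) (W_eig hx j)
      obtain ⟨m, c, hc, -, hm⟩ := eig_of_basis hl hS h (hv j) hμ
      exact ⟨m, c, hc, hm⟩
    choose ψ c hc hψ using h1
    have heig : ∀ j, toMat (matPart x) *ᵥ vecPart x j = l (ψ j) • vecPart x j := by
      intro j
      rw [hψ, Matrix.mulVec_smul, h, smul_comm]
    have hsame : ∀ i, ∀ p ∈ P.block i, ∀ q ∈ P.block i, ψ p = ψ q := by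
      intro i p hp q hq
      obtain ⟨b, hb⟩ := Function.ne_iff.1 (hv q)
      have hb' : vecPart x q b ≠ 0 := hb
      have hpq : vecPart x p = (vecPart x p b / vecPart x q b) • vecPart x q := by
        ext a
        rw [Pi.smul_apply, smul_eq_mul, div_mul_eq_mul_div, eq_div_iff hb', W_block hx i hp hq a b]
      apply hl
      refine eig_uniq (hv p) (heig p) ?_
      rw [hpq, Matrix.mulVec_smul, heig q, smul_comm]
    have hdiff : ∀ i i', i ≠ i' → ∀ p ∈ P.block i, ∀ q ∈ P.block i', ψ p ≠ ψ q := by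
      intro i i' hii p hp q hq hpq
      obtain ⟨a, ha⟩ := Function.ne_iff.1 (hv p)
      have ha' : vecPart x p a ≠ 0 := ha
      have e : ((toMat (matPart x) *ᵥ vecPart x p) a) • (1 : Matrix (Fin n) (Fin n) ℂ)
          - vecPart x p a • toMat (matPart x) =
          vecPart x p a • (l (ψ q) • 1 - toMat (matPart x)) := by
        have : (toMat (matPart x) *ᵥ vecPart x p) a = vecPart x p a * l (ψ q) := by
          rw [heig, hpq]; simp [mul_comm]
        rw [this, smul_sub, smul_smul]
      have h2 : ((((toMat (matPart x) *ᵥ vecPart x p) a) • (1 : Matrix (Fin n) (Fin n) ℂ)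
        - vecPart x p a • toMat (matPart x)).adjugate *ᵥ vecPart x q) = 0 := by
        ext b; exact W_adj hx hii hp hq a b
      rw [e, Matrix.adjugate_smul, Matrix.smul_mulVec, hψ q, Matrix.mulVec_smul] at h2
      rcases smul_eq_zero.1 h2 with h3 | h3
      · exact pow_ne_zero _ ha' h3
      · rcases smul_eq_zero.1 h3 with h3 | h3
        · exact hc q h3
        · exact adj_ne_zero hl hS h _ h3
    refine ⟨⟨fun i => ψ (P.rep i), fun i i' hii => ?_⟩, fun j => ⟨c j, hc j, ?_⟩⟩
    · by_contra hne
      exact hdiff i i' hne _ (Finset.min'_mem _ _) _ (Finset.min'_mem _ _) hii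
    · rw [hψ j]
      congr 2
      exact hsame (P.idx j) _ (P.mem_idx j) _ (Finset.min'_mem _ _)
  · rintro ⟨φ, hφ⟩
    choose c hc hφ using hφ
    refine subset_zClosure ⟨⟨?_, fun j => ⟨hv j, l (φ (P.idx j)), ?_⟩⟩, hv, ?_, ?_⟩
    · intro h0
      have hz : ∀ m, l m = 0 := by
        intro m
        have := h m
        have h00 : toMat (matPart x) = 0 := by rw [h0]; rfl
        rw [h00, Matrix.zero_mulVec] at this
        exact (smul_eq_zero.1 this.symm).resolve_right (col_ne hS m)
      have := @hl ⟨0, by omega⟩ ⟨1, by omega⟩ (by rw [hz, hz])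
      simp at this
    · rw [hφ]
      have := h (φ (P.idx j))
      rw [Matrix.mulVec_smul, this, smul_comm]
    · intro i p hp q hq
      refine ⟨c p / c q, ?_⟩
      simp only
      rw [hφ p, hφ q, P.idx_eq hp, P.idx_eq hq, smul_smul, div_mul_cancel₀ _ (hc q)]
    · intro r hr
      have h1 := (col_li hS).comp φ φ.injective
      have h2 := h1.units_smul (fun i => Units.mk0 (c (r i)) (hc (r i)))
      convert h2 using 1
      ext i a
      simp only
      rw [hφ, P.idx_eq (hr i)]
      rfl

lemma card_emb {k n : ℕ} (i : Fin k) (m : Fin n) :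
    Nat.card {φ : Fin k ↪ Fin n // φ i = m} = (n - 1).descFactorial (k - 1) := by
  classical
  let E : {φ : Fin k ↪ Fin n // φ i = m} ≃ ({x : Fin k // x ≠ i} ↪ {y : Fin n // y ≠ m}) :=
    { toFun := fun φ => ⟨fun x => ⟨φ.1 x.1, fun h => x.2 (φ.1.injective (h.trans φ.2.symm))⟩,
        fun x y hxy => Subtype.ext (φ.1.injective (congrArg Subtype.val hxy))⟩
      invFun := fun ψ => ⟨⟨fun x => if h : x = i then m else (ψ ⟨x, h⟩).1, by
        intro x y hxy
        by_cases hx : x = i <;> by_cases hy : y = i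
        · rw [hx, hy]
        · simp only [hx, hy, dif_pos, dif_neg, not_false_eq_true] at hxy
          exact absurd hxy.symm (ψ ⟨y, hy⟩).2
        · simp only [hx, hy, dif_pos, dif_neg, not_false_eq_true] at hxy
          exact absurd hxy (ψ ⟨x, hx⟩).2
        · simp only [hx, hy, dif_neg, not_false_eq_true] at hxy
          have := ψ.injective (Subtype.ext hxy)
          exact congrArg Subtype.val this⟩, by simp⟩
      left_inv := by
        intro φ
        apply Subtype.ext
        ext x
        by_cases hx : x = i
        · subst hx; simp [φ.2]
        · simp [hx]
          rfl
      right_inv := by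
        intro ψ
        ext x
        simp [x.2] }
  rw [Nat.card_congr E, Nat.card_eq_fintype_card, Fintype.card_embedding_eq]
  simp

/-- assemble a point of the multicone -/
def mkPt {n s : ℕ} (M : Matrix (Fin n) (Fin n) ℂ) (v : Fin s → Fin n → ℂ) : MIdx n s → ℂ :=
  Sum.elim (fun ij => M ij.1 ij.2) (fun jk => v jk.1 jk.2)

lemma toMat_mkPt {n s : ℕ} (M : Matrix (Fin n) (Fin n) ℂ) (v : Fin s → Fin n → ℂ) :
    toMat (matPart (mkPt M v)) = M := rfl

lemma vec_mkPt {n s : ℕ} (M : Matrix (Fin n) (Fin n) ℂ) (v : Fin s → Fin n → ℂ) (j : Fin s) :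
    vecPart (mkPt M v) j = v j := rfl

lemma pt_ext {n s : ℕ} {x y : MIdx n s → ℂ} (h : toMat (matPart x) = toMat (matPart y))
    (h' : ∀ j, vecPart x j = vecPart y j) : x = y := by
  ext z
  rcases z with ⟨i, j⟩ | ⟨j, i⟩
  · exact congrFun (congrFun h i) j
  · exact congrFun (h' j) i

lemma roots_card {F : ℂ[X]} (h : ∀ t, F.eval t = 0 → (derivative F).eval t ≠ 0) :
    F.roots.toFinset.card = F.natDegree := by
  have hsep : F.Separable := by
    rw [Polynomial.Separable]
    rw [Polynomial.isCoprime_iff_aeval_ne_zero_of_isAlgClosed ℂ ℂ]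
    intro x
    by_cases hx : F.eval x = 0
    · right; simpa using h x hx
    · left; simpa using hx
  rw [Multiset.toFinset_card_of_nodup (nodup_roots hsep),
      (IsAlgClosed.splits F).natDegree_eq_card_roots.symm]

lemma FF_const {n : ℕ} (e : Fin n → ℂ) (B0 : Matrix (Fin n) (Fin n) ℂ) :
    (FF e B0 0).natDegree = 0 := by
  have h : FF e B0 0 = C ((FF e B0 0).eval 0) := by
    apply Polynomial.funext
    intro t
    simp [FF_eval]
  rw [h, natDegree_C]

theorem count_pencil {n s k : ℕ} (hn : 2 ≤ n) (P : IdxPartition s k) (i : Fin s)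
    {B0 B1 : Matrix (Fin n) (Fin n) ℂ} {e : Fin n → ℂ} {c : Fin s → Fin n → ℂ}
    (good : GoodPencil B0 B1 e c) {D : ℂ} (hD : D ≠ 0) {α : Fin s → ℂ} (hα : ∀ j, α j ≠ 0)
    {Z : Set (MIdx n s → ℂ)}
    (hZ : ∀ x, x ∈ Z ↔ (∃ t : ℂ, D • toMat (matPart x) = B0 + t • B1) ∧
      (∀ j, α j + c j ⬝ᵥ vecPart x j = 0) ∧ e ⬝ᵥ vecPart x i = 0) :
    (WsPcone n P ∩ Z).ncard = n.choose 2 * (n - 1).descFactorial (k - 1) := by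
  classical
  set F := FF e B0 B1 with hF
  have hN0 : n.choose 2 ≠ 0 := (Nat.choose_pos hn).ne'
  have hB1 : B1 ≠ 0 := by
    rintro rfl
    exact hN0 (good.deg.symm.trans (FF_const e B0))
  have hF0 : F ≠ 0 := by
    intro h
    have := good.deg
    rw [← hF, h, natDegree_zero] at this
    exact hN0 this.symm
  set T := F.roots.toFinset with hT
  have hTc : T.card = n.choose 2 := by rw [hT, roots_card good.simple]; exact good.deg
  have hTm : ∀ t, t ∈ T ↔ F.eval t = 0 := by
    intro t; rw [hT, Multiset.mem_toFinset, mem_roots hF0]; rfl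
  have hex : ∀ t : T, ∃ (S : Matrix (Fin n) (Fin n) ℂ) (l : Fin n → ℂ) (m : Fin n),
      Function.Injective l ∧ S.det ≠ 0 ∧ (∀ m, (B0 + (t : ℂ) • B1) *ᵥ S.col m = l m • S.col m) ∧
      e ⬝ᵥ S.col m = 0 ∧ (∀ m', e ⬝ᵥ S.col m' = 0 → m' = m) ∧
      ∀ j m', c j ⬝ᵥ S.col m' ≠ 0 := by
    intro t
    have ht := (hTm t).1 t.2
    obtain ⟨S, l, hl, hS, h⟩ := exists_eigenbasis _ (good.disc t ht)
    have h1 := kal_det_mul e h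
    rw [← FF_eval, ← hF, ht, zero_mul] at h1
    have h2 := (mul_eq_zero.1 h1.symm).resolve_left (Matrix.det_vandermonde_ne_zero_iff.2 hl)
    obtain ⟨m, -, hm⟩ := Finset.prod_eq_zero_iff.1 h2
    refine ⟨S, l, m, hl, hS, h, hm, ?_, ?_⟩
    · intro m' hm'
      by_contra hne
      exact good.simple t ht (FF_double hS h hne hm' hm)
    · intro j m'
      exact kal_det_ne (h m') (col_ne hS m') (good.norm t ht j)
  choose S l m hl hS hev hm hmu hc using hex
  let f : (Σ t : T, {φ : Fin k ↪ Fin n // φ (P.idx i) = m t}) → (MIdx n s → ℂ) := fun p =>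
    mkPt (D⁻¹ • (B0 + (p.1 : ℂ) • B1)) (fun j =>
      (-α j / (c j ⬝ᵥ (S p.1).col (p.2.1 (P.idx j)))) • (S p.1).col (p.2.1 (P.idx j)))
  have hκ : ∀ (t : T) (φ : Fin k ↪ Fin n) j, -α j / (c j ⬝ᵥ (S t).col (φ (P.idx j))) ≠ 0 :=
    fun t φ j => div_ne_zero (neg_ne_zero.2 (hα j)) (hc _ _ _)
  have hfinj : Function.Injective f := by
    rintro ⟨t, φ, hφ⟩ ⟨t', φ', hφ'⟩ hff
    have h1 : D⁻¹ • (B0 + (t : ℂ) • B1) = D⁻¹ • (B0 + (t' : ℂ) • B1) :=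
      congrArg (fun x => toMat (matPart x)) hff
    have h2 : (t : ℂ) = t' := by
      have h3 := smul_right_injective _ (inv_ne_zero hD) h1
      exact smul_left_injective ℂ hB1 (add_left_cancel h3)
    have h2 : t = t' := Subtype.ext h2
    subst h2
    have h4 : φ = φ' := by
      ext b
      obtain ⟨j, hj⟩ := P.nonempty b
      have hv : (-α j / (c j ⬝ᵥ (S t).col (φ (P.idx j)))) • (S t).col (φ (P.idx j)) =
        (-α j / (c j ⬝ᵥ (S t).col (φ' (P.idx j)))) • (S t).col (φ' (P.idx j)) :=
        congrArg (fun x => vecPart x j) hff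
      have hne : (-α j / (c j ⬝ᵥ (S t).col (φ (P.idx j)))) • (S t).col (φ (P.idx j)) ≠ 0 :=
        smul_ne_zero (hκ _ _ _) (col_ne (hS t) _)
      have e1 : l t (φ (P.idx j)) = l t (φ' (P.idx j)) := by
        refine eig_uniq (A := B0 + (t : ℂ) • B1) hne ?_ ?_
        · rw [Matrix.mulVec_smul, hev, smul_comm]
        · rw [hv, Matrix.mulVec_smul, hev, smul_comm]
      have := hl t e1
      rw [P.idx_eq hj] at this
      rw [this]
    subst h4
    rfl
  have hev' : ∀ (t : T) (x : MIdx n s → ℂ), D • toMat (matPart x) = B0 + (t : ℂ) • B1 →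
      ∀ m, toMat (matPart x) *ᵥ (S t).col m = (D⁻¹ * l t m) • (S t).col m := by
    intro t x hx m
    have : toMat (matPart x) = D⁻¹ • (B0 + (t : ℂ) • B1) := by
      rw [← hx, smul_smul, inv_mul_cancel₀ hD, one_smul]
    rw [this, Matrix.smul_mulVec, hev, smul_smul]
  have hl' : ∀ t, Function.Injective (fun m => D⁻¹ * l t m) := fun t =>
    (mul_right_injective₀ (inv_ne_zero hD)).comp (hl t)
  have hrange : WsPcone n P ∩ Z = Set.range f := by
    ext x
    constructor
    · rintro ⟨hW, hxZ⟩
      obtain ⟨⟨t, ht⟩, hcx, hex⟩ := (hZ x).1 hxZ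
      have hv : ∀ j, vecPart x j ≠ 0 := by
        intro j h0
        have := hcx j
        rw [h0, dotProduct_zero, add_zero] at this
        exact hα j this
      have htF : F.eval t = 0 := by
        by_contra hne
        rw [hF, FF_eval] at hne
        obtain ⟨μ, hμ⟩ := eig_of_minors (hv i) (W_eig hW i)
        refine kal_det_ne (A := B0 + t • B1) (l := D * μ) ?_ (hv i) hne hex
        rw [← ht, Matrix.smul_mulVec, hμ, smul_smul]
      have htT := (hTm t).2 htF
      obtain ⟨φ, hφ⟩ := (mem_W_iff hn P x (hl' ⟨t, htT⟩) (hS ⟨t, htT⟩) (hev' ⟨t, htT⟩ x ht) hv).1 hW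
      refine ⟨⟨⟨t, htT⟩, φ, ?_⟩, ?_⟩
      · apply hmu
        obtain ⟨κ, hκ0, hκ1⟩ := hφ i
        rw [hκ1, dotProduct_smul] at hex
        exact (smul_eq_zero.1 hex).resolve_left hκ0
      · apply pt_ext
        · simp only [f, toMat_mkPt]
          rw [← ht, smul_smul, inv_mul_cancel₀ hD, one_smul]
        · intro j
          simp only [f, vec_mkPt]
          obtain ⟨κ, hκ0, hκ1⟩ := hφ j
          rw [hκ1]
          congr 1
          have := hcx j
          rw [hκ1, dotProduct_smul, smul_eq_mul] at this
          rw [div_eq_iff (hc _ _ _)]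
          linear_combination -this
    · rintro ⟨⟨t, φ, hφ⟩, rfl⟩
      have hZf : f ⟨t, φ, hφ⟩ ∈ Z := by
        rw [hZ]
        refine ⟨⟨t, ?_⟩, ?_, ?_⟩
        · simp only [f, toMat_mkPt]
          rw [smul_smul, mul_inv_cancel₀ hD, one_smul]
        · intro j
          simp only [f, vec_mkPt]
          rw [dotProduct_smul, smul_eq_mul, div_mul_cancel₀ _ (hc _ _ _)]
          ring
        · simp only [f, vec_mkPt]
          rw [dotProduct_smul, hφ, hm, smul_zero]
      refine ⟨?_, hZf⟩
      refine (mem_W_iff hn P _ (hl' t) (hS t) (hev' t _ ?_) ?_).2 ⟨φ, fun j => ⟨_, hκ t φ j, ?_⟩⟩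
      · simp only [f, toMat_mkPt]
        rw [smul_smul, mul_inv_cancel₀ hD, one_smul]
      · intro j
        simp only [f, vec_mkPt]
        exact smul_ne_zero (hκ _ _ _) (col_ne (hS t) _)
      · simp only [f, vec_mkPt]
  rw [hrange, ← Set.image_univ, Set.ncard_image_of_injective _ hfinj, Set.ncard_univ,
    Nat.card_sigma]
  simp only [card_emb]
  simp [hTc]

section fullsys
variable {ι ρ R : Type*} [Fintype ι] [DecidableEq ι] [Fintype ρ] [DecidableEq ρ] [CommRing R]

/-- the square system: given equations plus one coordinate functional -/
def fullM (E : ι ≃ Option ρ) (m : ρ → ι → R) : Matrix (Option ρ) (Option ρ) R :=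
  Matrix.of fun r c => r.elim (if c = none then 1 else 0) (fun r => m r (E.symm c))

/-- the right hand side -/
def fullRhs (m0 : ρ → R) (t : R) : Option ρ → R := fun r => r.elim t (fun r => - m0 r)

/-- base point of the solution pencil -/
def sol0 (E : ι ≃ Option ρ) (m : ρ → ι → R) (m0 : ρ → R) : ι → R :=
  fun z => ((fullM E m).adjugate *ᵥ fullRhs m0 0) (E z)

/-- direction of the solution pencil -/
def sol1 (E : ι ≃ Option ρ) (m : ρ → ι → R) : ι → R :=
  fun z => ((fullM E m).adjugate *ᵥ fullRhs (fun _ => 0) 1) (E z)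

lemma fullM_mulVec (E : ι ≃ Option ρ) (m : ρ → ι → R) {z0 : ι} (hz : E z0 = none) (x : ι → R)
    (r : Option ρ) : (fullM E m *ᵥ (fun o => x (E.symm o))) r =
      r.elim (x z0) (fun r => ∑ z, m r z * x z) := by
  have hz' : E.symm none = z0 := by rw [← hz]; simp
  rcases r with _ | r
  · simp [fullM, Matrix.mulVec, dotProduct, hz']
  · simp only [fullM, Matrix.mulVec, dotProduct, Option.elim, Matrix.of_apply]
    exact Equiv.sum_comp E.symm (fun z => m r z * x z)

lemma rhs_split (m0 : ρ → R) (t : R) :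
    fullRhs m0 t = fullRhs m0 0 + t • fullRhs (fun _ => 0) 1 := by
  ext r
  rcases r with _ | r <;> simp [fullRhs]

lemma sol_iff {ι ρ : Type*} [Fintype ι] [DecidableEq ι] [Fintype ρ] [DecidableEq ρ]
    (E : ι ≃ Option ρ) (m : ρ → ι → ℂ) (m0 : ρ → ℂ) {z0 : ι} (hz : E z0 = none)
    (hD : (fullM E m).det ≠ 0) (x : ι → ℂ) :
    (∀ r, m0 r + ∑ z, m r z * x z = 0) ↔
      ∃ t : ℂ, ∀ z, (fullM E m).det * x z = sol0 E m m0 z + t * sol1 E m z := by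
  constructor
  · intro h
    refine ⟨x z0, fun z => ?_⟩
    have h1 : fullM E m *ᵥ (fun o => x (E.symm o)) = fullRhs m0 (x z0) := by
      ext r
      rw [fullM_mulVec E m hz]
      rcases r with _ | r
      · rfl
      · simp only [fullRhs, Option.elim]; linear_combination h r
    have h2 := congrArg (fun y => ((fullM E m).adjugate *ᵥ y) (E z)) h1
    simp only [Matrix.mulVec_mulVec, Matrix.adjugate_mul, Matrix.smul_mulVec, Matrix.one_mulVec,
      Pi.smul_apply, Equiv.symm_apply_apply, smul_eq_mul] at h2
    rw [h2, rhs_split, Matrix.mulVec_add, Matrix.mulVec_smul]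
    rfl
  · rintro ⟨t, ht⟩ r
    have h1 : (fullM E m).det • (fun o => x (E.symm o)) = (fullM E m).adjugate *ᵥ fullRhs m0 t := by
      ext o
      rw [rhs_split, Matrix.mulVec_add, Matrix.mulVec_smul]
      have := ht (E.symm o)
      simpa [sol0, sol1] using this
    have h2 := congrArg (fun y => (fullM E m *ᵥ y) (some r)) h1
    simp only [Matrix.mulVec_mulVec, Matrix.mul_adjugate, Matrix.smul_mulVec, Matrix.one_mulVec,
      Matrix.mulVec_smul, Pi.smul_apply, smul_eq_mul] at h2
    have h3 := mul_left_cancel₀ hD h2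
    rw [fullM_mulVec E m hz] at h3
    simp only [fullRhs, Option.elim] at h3
    rw [h3]; ring

lemma fullM_map {R' : Type*} [CommRing R'] (f : R →+* R') (E : ι ≃ Option ρ) (m : ρ → ι → R) :
    f.mapMatrix (fullM E m) = fullM E (fun r z => f (m r z)) := by
  ext r c
  rcases r with _ | r
  · simp only [fullM, RingHom.mapMatrix_apply, Matrix.map_apply, Matrix.of_apply, Option.elim]
    split_ifs <;> simp
  · simp [fullM]

lemma fullD_map {R' : Type*} [CommRing R'] (f : R →+* R') (E : ι ≃ Option ρ) (m : ρ → ι → R) :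
    f (fullM E m).det = (fullM E (fun r z => f (m r z))).det := by
  rw [RingHom.map_det, fullM_map]

lemma adj_rhs_map {R' : Type*} [CommRing R'] (f : R →+* R') (E : ι ≃ Option ρ) (m : ρ → ι → R)
    (m0 : ρ → R) (t : R) (o : Option ρ) :
    f (((fullM E m).adjugate *ᵥ fullRhs m0 t) o) =
      ((fullM E (fun r z => f (m r z))).adjugate *ᵥ fullRhs (fun r => f (m0 r)) (f t)) o := by
  rw [← fullM_map, ← RingHom.map_adjugate, RingHom.map_mulVec]
  simp only [RingHom.mapMatrix_apply]
  congr 2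
  ext r
  rcases r with _ | r <;> simp [fullRhs]

lemma sol0_map {R' : Type*} [CommRing R'] (f : R →+* R') (E : ι ≃ Option ρ) (m : ρ → ι → R)
    (m0 : ρ → R) (z : ι) :
    f (sol0 E m m0 z) = sol0 E (fun r z => f (m r z)) (fun r => f (m0 r)) z := by
  simp only [sol0, adj_rhs_map, map_zero]

lemma sol1_map {R' : Type*} [CommRing R'] (f : R →+* R') (E : ι ≃ Option ρ) (m : ρ → ι → R)
    (z : ι) : f (sol1 E m z) = sol1 E (fun r z => f (m r z)) z := by
  simp only [sol1, adj_rhs_map, map_zero, map_one]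

/-- witness equations -/
def witM (E : ι ≃ Option ρ) (z0 : ι) (A1 : ι → R) : ρ → ι → R :=
  fun r z => (if z = E.symm (some r) then 1 else 0) - (if z = z0 then A1 (E.symm (some r)) else 0)

lemma witM_sum (E : ι ≃ Option ρ) (z0 : ι) (A1 : ι → R) (r : ρ) (x : ι → R) :
    ∑ z, witM E z0 A1 r z * x z = x (E.symm (some r)) - A1 (E.symm (some r)) * x z0 := by
  simp [witM, sub_mul, Finset.sum_sub_distrib]

lemma wit_det {ι ρ : Type*} [Fintype ι] [DecidableEq ι] [Fintype ρ] [DecidableEq ρ]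
    (E : ι ≃ Option ρ) {z0 : ι} (hz : E z0 = none) (A1 : ι → ℂ) :
    (fullM E (witM E z0 A1)).det ≠ 0 := by
  intro h
  obtain ⟨w, hw, hw0⟩ := Matrix.exists_mulVec_eq_zero_iff.2 h
  apply hw
  have hz' : E.symm none = z0 := by rw [← hz]; simp
  have key : ∀ r, (fullM E (witM E z0 A1) *ᵥ (fun o => (fun z => w (E z)) (E.symm o))) r = 0 := by
    intro r
    simp [hw0]
  have h0 : w (E z0) = 0 := by
    have := key none
    rw [fullM_mulVec E _ hz (fun z => w (E z))] at this
    simpa using this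
  ext r
  rcases r with _ | r
  · rw [← hz, h0]; rfl
  · have := key (some r)
    rw [fullM_mulVec E _ hz (fun z => w (E z))] at this
    simp only [Option.elim] at this
    rw [witM_sum, h0] at this
    simpa using this

lemma adj_of_mulVec (E : ι ≃ Option ρ) (m : ρ → ι → R) {z0 : ι} (hz : E z0 = none) (x : ι → R)
    (m0 : ρ → R) (t : R) (h0 : x z0 = t) (h : ∀ r, ∑ z, m r z * x z = - m0 r) (z : ι) :
    ((fullM E m).adjugate *ᵥ fullRhs m0 t) (E z) = (fullM E m).det * x z := by
  have h1 : fullM E m *ᵥ (fun o => x (E.symm o)) = fullRhs m0 t := by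
    ext r
    rw [fullM_mulVec E m hz]
    rcases r with _ | r
    · exact h0
    · exact h r
  rw [← h1, Matrix.mulVec_mulVec, Matrix.adjugate_mul, Matrix.smul_mulVec, Matrix.one_mulVec]
  simp

lemma wit_sol0 (E : ι ≃ Option ρ) {z0 : ι} (hz : E z0 = none) (A0 A1 : ι → R) (h0 : A0 z0 = 0)
    (z : ι) : sol0 E (witM E z0 A1) (fun r => - A0 (E.symm (some r))) z =
      (fullM E (witM E z0 A1)).det * A0 z := by
  refine adj_of_mulVec E _ hz A0 _ 0 h0 (fun r => ?_) z
  rw [witM_sum, h0]; ring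

lemma wit_sol1 (E : ι ≃ Option ρ) {z0 : ι} (hz : E z0 = none) (A1 : ι → R) (h1 : A1 z0 = 1)
    (z : ι) : sol1 E (witM E z0 A1) z = (fullM E (witM E z0 A1)).det * A1 z := by
  refine adj_of_mulVec E _ hz A1 _ 1 h1 (fun r => ?_) z
  rw [witM_sum, h1]; ring

end fullsys

lemma exists_equiv_option {ι : Type*} [Fintype ι] [DecidableEq ι] (z0 : ι) {N : ℕ}
    (h : Fintype.card ι = N + 1) : ∃ E : ι ≃ Option (Fin N), E z0 = none := by
  have E0 : ι ≃ Option (Fin N) := Fintype.equivOfCardEq (by simp [h])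
  exact ⟨E0.trans (Equiv.swap (E0 z0) none), by simp⟩

set_option maxHeartbeats 400000 in
theorem main_two_aux {n s k : ℕ} (hn : 2 ≤ n) (P : IdxPartition s k) (i : Fin s)
    (γ : Fin (s + 1) → ℕ) (hγ0 : γ 0 = 1) (hγj : ∀ j : Fin s, j ≠ i → γ j.succ = n - 1)
    (hγi : γ i.succ = n - 2) :
    hasMD (WsPcone n P) γ (Nat.choose n 2 * Nat.descFactorial (n - 1) (k - 1)) := by
  classical
  have hpos : ∀ j : Fin s, 0 < n - γ j.succ := by
    intro j
    by_cases hj : j = i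
    · subst hj; omega
    · have := hγj j hj; omega
  let r0 : ∀ j : Fin s, Fin (n - γ j.succ) := fun j => ⟨0, hpos j⟩
  let r1 : Fin (n - γ i.succ) := ⟨1, by omega⟩
  let z0 : Fin n × Fin n := (⟨0, by omega⟩, ⟨0, by omega⟩)
  obtain ⟨E, hE⟩ := exists_equiv_option z0 (N := n ^ 2 - γ 0) (by
    have : 0 < n ^ 2 := by positivity
    simp [hγ0]; rw [← pow_two]; omega)
  let m : Fin (n ^ 2 - γ 0) → Fin n × Fin n → (MvPolynomial (MSliceParam n s γ) ℂ) := fun r z => MvPolynomial.X (Sum.inl (r, some z))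
  let m0 : Fin (n ^ 2 - γ 0) → (MvPolynomial (MSliceParam n s γ) ℂ) := fun r => MvPolynomial.X (Sum.inl (r, none))
  let α : Fin s → (MvPolynomial (MSliceParam n s γ) ℂ) := fun j => MvPolynomial.X (Sum.inr (⟨j, r0 j⟩, none))
  let c : Fin s → Fin n → (MvPolynomial (MSliceParam n s γ) ℂ) := fun j q => MvPolynomial.X (Sum.inr (⟨j, r0 j⟩, some q))
  let β : (MvPolynomial (MSliceParam n s γ) ℂ) := MvPolynomial.X (Sum.inr (⟨i, r1⟩, none))
  let d : Fin n → (MvPolynomial (MSliceParam n s γ) ℂ) := fun q => MvPolynomial.X (Sum.inr (⟨i, r1⟩, some q))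
  let e : Fin n → (MvPolynomial (MSliceParam n s γ) ℂ) := fun q => β * c i q - α i * d q
  let B0 : Matrix (Fin n) (Fin n) (MvPolynomial (MSliceParam n s γ) ℂ) := Matrix.of fun p q => sol0 E m m0 (p, q)
  let B1 : Matrix (Fin n) (Fin n) (MvPolynomial (MSliceParam n s γ) ℂ) := Matrix.of fun p q => sol1 E m (p, q)
  let w : (Fin n × Fin n → ℂ) → (Fin n × Fin n → ℂ) → (Fin n → ℂ) → MSliceParam n s γ → ℂ :=
    fun A0 A1 e' => Sum.elim
      (fun p => p.2.elim (- A0 (E.symm (some p.1))) (fun z => witM E z0 A1 p.1 z))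
      (fun p => if (p.1.2 : ℕ) = 0 then 1 else p.2.elim 0 (fun q => - e' q))
  have hwm : ∀ A0 A1 e', (fun r z => MvPolynomial.eval (w A0 A1 e') (m r z)) = witM E z0 A1 := by
    intro A0 A1 e'; ext r z; simp [m, w]
  have hwm0 : ∀ A0 A1 e', (fun r => MvPolynomial.eval (w A0 A1 e') (m0 r)) =
      fun r => - A0 (E.symm (some r)) := by
    intro A0 A1 e'; ext r; simp [m0, w]
  have hwα : ∀ A0 A1 e' j, MvPolynomial.eval (w A0 A1 e') (α j) = 1 := by
    intro A0 A1 e' j; simp [α, w, r0]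
  have hwc : ∀ A0 A1 e' j q, MvPolynomial.eval (w A0 A1 e') (c j q) = 1 := by
    intro A0 A1 e' j q; simp [c, w, r0]
  have hwe : ∀ A0 A1 e' q, MvPolynomial.eval (w A0 A1 e') (e q) = e' q := by
    intro A0 A1 e' q
    simp only [e, map_sub, map_mul, hwα, hwc]
    simp [β, d, w, r1]
  clear_value w
  have hwit : ∀ (A0 A1 : Matrix (Fin n) (Fin n) ℂ) (e' : Fin n → ℂ),
      A0 ⟨0, by omega⟩ ⟨0, by omega⟩ = 0 → A1 ⟨0, by omega⟩ ⟨0, by omega⟩ = 1 →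
      ∃ (a : MSliceParam n s γ → ℂ) (D : ℂ), D ≠ 0 ∧ B0.map (MvPolynomial.eval a) = D • A0 ∧
        B1.map (MvPolynomial.eval a) = D • A1 ∧ (fun i => MvPolynomial.eval a (e i)) = e' ∧
        ∀ j i, MvPolynomial.eval a (c j i) = 1 := by
    intro A0 A1 e' h0 h1
    refine ⟨w (fun z => A0 z.1 z.2) (fun z => A1 z.1 z.2) e',
      (fullM E (witM E z0 (fun z => A1 z.1 z.2))).det, wit_det E hE _, ?_, ?_, ?_, ?_⟩
    · ext p q
      simp only [B0, Matrix.map_apply, Matrix.of_apply, sol0_map, hwm, hwm0]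
      exact wit_sol0 E hE (fun z => A0 z.1 z.2) _ h0 (p, q)
    · ext p q
      simp only [B1, Matrix.map_apply, Matrix.of_apply, sol1_map, hwm]
      exact wit_sol1 E hE _ h1 (p, q)
    · ext q; rw [hwe]
    · intro j q; rw [hwc]
  obtain ⟨G, hG, hGood⟩ := generic_pencil hn B0 B1 e c hwit
  have hDne : (fullM E m).det ≠ 0 := by
    intro h
    have h1 := congrArg (MvPolynomial.eval (w 0 0 0)) h
    rw [fullD_map, hwm, map_zero] at h1
    exact wit_det E hE _ h1
  have hαne : ∏ j, α j ≠ 0 := Finset.prod_ne_zero_iff.2 (fun j _ => MvPolynomial.X_ne_zero _)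
  refine ⟨{a | MvPolynomial.eval a (G * (fullM E m).det * ∏ j, α j) ≠ 0}, zOpen_basic _,
    zDense_basic _ (mul_ne_zero (mul_ne_zero hG hDne) hαne), ?_⟩
  intro a ha
  simp only [Set.mem_ofPred_eq, map_mul] at ha
  have ha3 := right_ne_zero_of_mul ha
  have ha1 := left_ne_zero_of_mul (left_ne_zero_of_mul ha)
  have ha2 := right_ne_zero_of_mul (left_ne_zero_of_mul ha)
  rw [map_prod] at ha3
  have hα : ∀ j, MvPolynomial.eval a (α j) ≠ 0 := fun j =>
    Finset.prod_ne_zero_iff.1 ha3 j (Finset.mem_univ _)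
  refine count_pencil hn P i (hGood a ha1) ha2 hα ?_
  intro x
  have hmat : (∀ r : Fin (n ^ 2 - γ 0), a (Sum.inl (r, none)) +
      ∑ ij : Fin n × Fin n, a (Sum.inl (r, some ij)) * x (Sum.inl ij) = 0) ↔
      ∃ t : ℂ, MvPolynomial.eval a (fullM E m).det • toMat (matPart x) =
        B0.map (MvPolynomial.eval a) + t • B1.map (MvPolynomial.eval a) := by
    rw [fullD_map] at ha2
    have := sol_iff E (fun r z => MvPolynomial.eval a (m r z))
      (fun r => MvPolynomial.eval a (m0 r)) hE ha2 (matPart x)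
    rw [fullD_map]
    simp only [m, m0, MvPolynomial.eval_X] at this ⊢
    refine this.trans (exists_congr fun t => ?_)
    constructor
    · intro h
      ext p q
      have := h (p, q)
      simp only [B0, B1, Matrix.add_apply, Matrix.smul_apply, Matrix.map_apply, Matrix.of_apply,
        sol0_map, sol1_map, m, m0, MvPolynomial.eval_X, smul_eq_mul]
      exact this
    · rintro h ⟨p, q⟩
      have := congrFun (congrFun h p) q
      simp only [B0, B1, Matrix.add_apply, Matrix.smul_apply, Matrix.map_apply, Matrix.of_apply,
        sol0_map, sol1_map, m, m0, MvPolynomial.eval_X, smul_eq_mul] at this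
      exact this
  have hvec : (∀ j : Fin s, ∀ r : Fin (n - γ j.succ), a (Sum.inr (⟨j, r⟩, none)) +
      ∑ q : Fin n, a (Sum.inr (⟨j, r⟩, some q)) * x (Sum.inr (j, q)) = 0) ↔
      (∀ j, a (Sum.inr (⟨j, r0 j⟩, none)) +
        ∑ q : Fin n, a (Sum.inr (⟨j, r0 j⟩, some q)) * x (Sum.inr (j, q)) = 0) ∧
      a (Sum.inr (⟨i, r1⟩, none)) +
        ∑ q : Fin n, a (Sum.inr (⟨i, r1⟩, some q)) * x (Sum.inr (i, q)) = 0 := by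
    constructor
    · intro h
      exact ⟨fun j => h j _, h i _⟩
    · rintro ⟨h1, h2⟩ j r
      by_cases hj : j = i
      · subst hj
        by_cases hr : r = r0 j
        · rw [hr]; exact h1 j
        · have : r = r1 := by
            have h3 : (r : ℕ) ≠ 0 := fun h => hr (Fin.ext h)
            have := r.2
            apply Fin.ext
            change (r : ℕ) = 1
            omega
          rw [this]; exact h2
      · have : r = r0 j := by
          have := r.2
          have h4 := hγj j hj
          apply Fin.ext
          change (r : ℕ) = 0
          omega
        rw [this]; exact h1 j
  have hsl : x ∈ mSlice γ a ↔ _ ∧ _ := Iff.rfl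
  rw [hsl, hmat, hvec]
  refine and_congr Iff.rfl ?_
  have hc' : ∀ j, (fun q => MvPolynomial.eval a (c j q)) ⬝ᵥ vecPart x j =
      ∑ q : Fin n, a (Sum.inr (⟨j, r0 j⟩, some q)) * x (Sum.inr (j, q)) := by
    intro j; simp [c, dotProduct, vecPart]
  have hα' : ∀ j, MvPolynomial.eval a (α j) = a (Sum.inr (⟨j, r0 j⟩, none)) := by
    intro j; simp [α]
  have he' : (fun q => MvPolynomial.eval a (e q)) ⬝ᵥ vecPart x i =
      a (Sum.inr (⟨i, r1⟩, none)) * (∑ q : Fin n, a (Sum.inr (⟨i, r0 i⟩, some q)) * x (Sum.inr (i, q)))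
      - a (Sum.inr (⟨i, r0 i⟩, none)) *
        ∑ q : Fin n, a (Sum.inr (⟨i, r1⟩, some q)) * x (Sum.inr (i, q)) := by
    rw [Finset.mul_sum, Finset.mul_sum, ← Finset.sum_sub_distrib]
    refine Finset.sum_congr rfl fun q _ => ?_
    simp only [e, c, d, β, α, map_sub, map_mul, MvPolynomial.eval_X, vecPart]
    ring
  simp only [hc', hα']
  rw [he']
  refine and_congr_right fun h => ?_
  have h1 := h i
  have h2 := hα i
  rw [hα'] at h2
  constructor
  · intro h3
    linear_combination (a (Sum.inr (⟨i, r1⟩, none))) * h1 - a (Sum.inr (⟨i, r0 i⟩, none)) * h3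
  · intro h3
    apply mul_left_cancel₀ h2
    linear_combination (a (Sum.inr (⟨i, r1⟩, none))) * h1 - h3

theorem main_two {n s k : ℕ} (hn : 2 ≤ n) (P : IdxPartition s k) (i : Fin s) :
    hasMD (WsPcone n P) (specialExp n s i)
      (Nat.choose n 2 * Nat.descFactorial (n - 1) (k - 1)) := by
  refine main_two_aux hn P i _ ?_ ?_ ?_
  · simp [specialExp]
  · intro j hj
    simp [specialExp, hj, Fin.succ_ne_zero]
  · simp [specialExp, Fin.succ_ne_zero]

theorem main_one {s k : ℕ} (hs : s ≤ 1) (P : IdxPartition s k) (i : Fin s) :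
    hasMD (WsPcone 1 P) (specialExp 1 s i) 0 := by
  have hs1 : s = 1 := by have := i.2; omega
  subst hs1
  set γ := specialExp 1 1 i with hγ
  have hγ0 : γ 0 = 1 := by simp [hγ, specialExp]
  have hi : ∀ j : Fin 1, j = i := fun j => Subsingleton.elim _ _
  have hγi : ∀ j : Fin 1, γ j.succ = 0 := by
    intro j; rw [hi j]; simp [hγ, specialExp, Fin.succ_ne_zero]
  let r0 : Fin (1 - γ i.succ) := ⟨0, by have := hγi i; omega⟩
  let q1 : MSliceParam 1 1 γ := Sum.inr (⟨i, r0⟩, none)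
  let q2 : MSliceParam 1 1 γ := Sum.inr (⟨i, r0⟩, some 0)
  refine ⟨{a | MvPolynomial.eval a (MvPolynomial.X q1 * MvPolynomial.X q2) ≠ 0}, zOpen_basic _,
    zDense_basic _ (mul_ne_zero (MvPolynomial.X_ne_zero _) (MvPolynomial.X_ne_zero _)), ?_⟩
  intro a ha
  simp only [Set.mem_ofPred_eq, map_mul, MvPolynomial.eval_X] at ha
  have h1 := left_ne_zero_of_mul ha
  have h2 := right_ne_zero_of_mul ha
  apply Set.Infinite.ncard
  let f : ℕ → (MIdx 1 1 → ℂ) := fun t =>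
    mkPt (Matrix.of fun _ _ => ((t : ℂ) + 1)) (fun _ _ => - a q1 / a q2)
  have hf : Function.Injective f := by
    intro t t' h
    have := congrFun h (Sum.inl (0, 0))
    simpa [f, mkPt] using this
  refine Set.infinite_of_injective_forall_mem hf ?_
  intro t
  have hv : - a q1 / a q2 ≠ 0 := div_ne_zero (neg_ne_zero.2 h1) h2
  have hv' : ∀ j, vecPart (f t) j ≠ 0 := fun j h => hv (congrFun h 0)
  refine ⟨subset_zClosure ⟨⟨?_, fun j => ⟨hv' j, (t : ℂ) + 1, ?_⟩⟩, hv', ?_, ?_⟩, ?_, ?_⟩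
  · intro h
    have := congrFun h (0, 0)
    simp [f, mkPt, matPart] at this
    exact Nat.cast_add_one_ne_zero t this
  · ext q
    simp [f, toMat_mkPt, vec_mkPt, Matrix.mulVec, dotProduct]
  · intro b p _ q _
    exact ⟨1, by simp only [one_smul]; rfl⟩
  · intro r hr
    have hk : Subsingleton (Fin k) := by
      constructor
      intro b b'
      by_contra hne
      have := P.disj b b' hne
      refine Finset.disjoint_left.1 this (hr b) ?_
      rw [Subsingleton.elim (r b) (r b')]; exact hr b'
    exact (linearIndependent_subsingleton_index_iff _).2 (fun b => hv' _)
  · intro r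
    have := r.2
    omega
  · intro j r
    have hj := hi j
    subst hj
    have hr : r = r0 := by
      have := r.2
      have h4 := hγi j
      apply Fin.ext
      change (r : ℕ) = 0
      omega
    subst hr
    simp only [f, mkPt, Sum.elim_inr, Finset.univ_unique, Finset.sum_singleton]
    change a q1 + a q2 * (- a q1 / a q2) = 0
    rw [mul_div_cancel₀ _ h2]; ring

theorem main_all {n s k : ℕ} (hn : 0 < n) (hsn : s ≤ n) (P : IdxPartition s k) (i : Fin s) :
    hasMD (WsPcone n P) (specialExp n s i)
      (Nat.choose n 2 * Nat.descFactorial (n - 1) (k - 1)) := by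
  rcases Nat.lt_or_ge 1 n with h | h
  · exact main_two h P i
  · have : n = 1 := by omega
    subst this
    simpa using main_one hsn P i

end proofMaterial

/-- For every partition `P` of `{1, …, s}`, the coefficient `c_{s,P}` of
`h_0 ∑_i h_1^{n-1} ⋯ h_i^{n-2} ⋯ h_s^{n-1}` in `[W_{s,P}]` equals
`binom(n,2) · (n-1)_{|P|-1}`; in particular the corresponding coefficient of `[W̃_s]` is
`binom(n,2) · (n-1)_{s-1}`. -/
theorem WsP_coefficient_value (n s k : ℕ) (hn : 0 < n) (hs : 0 < s) (hsn : s ≤ n)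
    (P : IdxPartition s k) :
    (∀ i : Fin s, hasMD (WsPcone n P) (specialExp n s i)
      (Nat.choose n 2 * Nat.descFactorial (n - 1) (k - 1))) ∧
    (∀ i : Fin s, hasMD (WsPcone n (singletonPartition s)) (specialExp n s i)
      (Nat.choose n 2 * Nat.descFactorial (n - 1) (s - 1))) := by
  exact ⟨fun i => main_all hn hsn P i, fun i => main_all hn hsn (singletonPartition s) i⟩

end
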